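/- Let D be a non-dictatorial, unidimensional domain and fix n ≥ 2. There exists no anonymous, tops-only and strategy-proof rule f : D^n → A if and only if D is a semi-hybrid domain satisfying the unique seconds property; moreover, if D is an (a,b)-semi-hybrid domain on a tree T and admits no anonymous, tops-only and strategy-proof rule, then every tops-only and strategy-proof rule f : D^n → A behaves like a dictatorship on the free zone ⟨a, b|T⟩. -/

import Mathlib

open Classical

/-- A strict preference over `A`, represented as a ranking bijection:
`P k` is the `(k+1)`-th ranked alternative. -/
abbrev Pref (A : Type*) [Fintype A] := Fin (Fintype.card A) ≃ A

variable {A : Type*} [Fintype A] [DecidableEq A] [Nonempty A]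

/-- `rk P k` : the `(k+1)`-th ranked alternative of `P` (0-indexed, so `rk P 0 = r₁(P)`). -/
noncomputable def rk (P : Pref A) (k : ℕ) : A :=
  if h : k < Fintype.card A then P ⟨k, h⟩ else Classical.arbitrary A

/-- The peak `r₁(P)`. -/
noncomputable def peak (P : Pref A) : A := rk P 0

/-- The second-ranked alternative `r₂(P)`. -/
noncomputable def second (P : Pref A) : A := rk P 1

/-- `a` is strictly preferred to `b` under `P`. -/
def prefers (P : Pref A) (a b : A) : Prop := P.symm a < P.symm b

/-- Two preferences are completely reversed. -/
def Reversed (P P' : Pref A) : Prop := ∀ a b : A, prefers P a b ↔ prefers P' b a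

/-- A profile lies in the domain `D`. -/
def InDom (D : Set (Pref A)) {n : ℕ} (P : Fin n → Pref A) : Prop := ∀ i, P i ∈ D

/-- Unanimity (an SCF satisfying it is called a rule). -/
def IsRule (D : Set (Pref A)) {n : ℕ} (f : (Fin n → Pref A) → A) : Prop :=
  ∀ P : Fin n → Pref A, InDom D P → ∀ a : A, (∀ i, peak (P i) = a) → f P = a

/-- Strategy-proofness (relative to the domain `D`). -/
def StrategyProof (D : Set (Pref A)) {n : ℕ} (f : (Fin n → Pref A) → A) : Prop :=
  ∀ P : Fin n → Pref A, InDom D P → ∀ i : Fin n, ∀ Q ∈ D,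
    f P = f (Function.update P i Q) ∨ prefers (P i) (f P) (f (Function.update P i Q))

/-- The tops-only property. -/
def TopsOnly (D : Set (Pref A)) {n : ℕ} (f : (Fin n → Pref A) → A) : Prop :=
  ∀ P P' : Fin n → Pref A, InDom D P → InDom D P' →
    (∀ i, peak (P i) = peak (P' i)) → f P = f P'

/-- Anonymity. -/
def Anonymous (D : Set (Pref A)) {n : ℕ} (f : (Fin n → Pref A) → A) : Prop :=
  ∀ P : Fin n → Pref A, InDom D P → ∀ σ : Equiv.Perm (Fin n), f (P ∘ σ) = f P

/-- `f` behaves like a dictatorship on `B`. -/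
def DictatorOn (D : Set (Pref A)) {n : ℕ} (f : (Fin n → Pref A) → A) (B : Set A) : Prop :=
  ∃ i : Fin n, ∀ P : Fin n → Pref A, InDom D P → (∀ j, peak (P j) ∈ B) → f P = peak (P i)

/-- `f` is a dictatorship. -/
def Dictatorship (D : Set (Pref A)) {n : ℕ} (f : (Fin n → Pref A) → A) : Prop :=
  DictatorOn D f Set.univ

/-- A dictatorial domain. -/
def DictatorialDomain (D : Set (Pref A)) : Prop :=
  ∀ n : ℕ, 2 ≤ n → ∀ f : (Fin n → Pref A) → A,
    IsRule D f → StrategyProof D f → Dictatorship D f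

/-- A tops-only domain. -/
def TopsOnlyDomain (D : Set (Pref A)) : Prop :=
  ∀ n : ℕ, 2 ≤ n → ∀ f : (Fin n → Pref A) → A,
    IsRule D f → StrategyProof D f → TopsOnly D f

/-- Adjacency of two alternatives relative to the domain `D`. -/
def DomAdjacent (D : Set (Pref A)) (a b : A) : Prop :=
  ∃ P ∈ D, ∃ P' ∈ D, peak P = a ∧ second P = b ∧ peak P' = b ∧ second P' = a ∧
    ∀ k : ℕ, 2 ≤ k → rk P k = rk P' k

/-- The adjacency graph `G_∼` of the domain `D`. -/
noncomputable def adjGraph (D : Set (Pref A)) : SimpleGraph A :=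
  SimpleGraph.fromRel (DomAdjacent D)

/-- Path-connectedness of the domain. -/
def PathConnectedDom (D : Set (Pref A)) : Prop := (adjGraph D).Connected

/-- Diversity: the domain contains two completely reversed preferences. -/
def Diversity (D : Set (Pref A)) : Prop := ∃ P ∈ D, ∃ P' ∈ D, Reversed P P'

/-- `S(D^a)`: the set of alternatives second-ranked in some preference of `D` with peak `a`. -/
def secondsSet (D : Set (Pref A)) (a : A) : Set A := {b | ∃ P ∈ D, peak P = a ∧ second P = b}

/-- Leaf symmetry. -/
def LeafSymmetry (D : Set (Pref A)) : Prop :=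
  ∀ x : A, (∃! y, (adjGraph D).Adj x y) →
    (∃ u ∈ secondsSet D x, ∃ v ∈ secondsSet D x, u ≠ v) →
    ∃ z ∈ secondsSet D x, ¬ (adjGraph D).Adj x z ∧ x ∈ secondsSet D z

/-- Unidimensionality: path-connectedness, diversity and leaf symmetry. -/
def Unidimensional (D : Set (Pref A)) : Prop :=
  PathConnectedDom D ∧ Diversity D ∧ LeafSymmetry D

/-- The unique seconds property. -/
def UniqueSeconds (D : Set (Pref A)) : Prop := ∃ x b : A, secondsSet D x = {b}

/-- Minimal richness. -/
def MinimallyRich (D : Set (Pref A)) : Prop := ∀ a : A, ∃ P ∈ D, peak P = a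

/-- The vertex set `⟨x, y|T⟩` of the (in a tree, unique) shortest path between `x` and `y`. -/
def intv (T : SimpleGraph A) (x y : A) : Set A :=
  {z | T.dist x z + T.dist z y = T.dist x y}

/-- `a'` is the projection of `a` onto `B` in `T`. -/
def IsProjPt (T : SimpleGraph A) (B : Set A) (a a' : A) : Prop :=
  a' ∈ B ∧ ∀ b ∈ B, a' ∈ intv T a b

/-- The projection `Proj(a, B)` of `a` onto a path-closed set `B` in the tree `T`. -/
noncomputable def projOn (T : SimpleGraph A) (B : Set A) (a : A) : A :=
  if h : ∃ a', IsProjPt T B a a' then h.choose else a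

/-- `Γ(P)`: the vertex set of the minimal subtree of `T` spanning all the peaks. -/
def gammaSet (T : SimpleGraph A) {n : ℕ} (P : Fin n → Pref A) : Set A :=
  {c | ∃ i j : Fin n, c ∈ intv T (peak (P i)) (peak (P j))}

/-- The projection rule on `T` w.r.t. `xbar`. -/
noncomputable def projRule (T : SimpleGraph A) (xbar : A) {n : ℕ}
    (P : Fin n → Pref A) : A :=
  projOn T (gammaSet T P) xbar

/-- Single-peakedness on a tree. -/
def SinglePeaked (T : SimpleGraph A) (P : Pref A) : Prop :=
  ∀ c d : A, c ≠ d → c ∈ intv T (peak P) d → prefers P c d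

/-- Semi-single-peakedness on `T` w.r.t. the threshold `xbar`. -/
def SemiSP (T : SimpleGraph A) (xbar : A) (P : Pref A) : Prop :=
  (∀ c d : A, c ∈ intv T (peak P) xbar → d ∈ intv T (peak P) xbar → c ≠ d →
    c ∈ intv T (peak P) d → prefers P c d) ∧
  (∀ c : A, c ∉ intv T (peak P) xbar →
    prefers P (projOn T (intv T (peak P) xbar) c) c)

/-- A semi-single-peaked domain. -/
def SemiSPDomain (D : Set (Pref A)) : Prop :=
  ∃ (T : SimpleGraph A) (xbar : A), T.IsTree ∧
    D ⊆ {P | SemiSP T xbar P} ∧ (adjGraph D).Connected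

/-- `A^{a⇀b}`: the alternatives whose path to `b` goes through `a`. -/
def sideSet (T : SimpleGraph A) (a b : A) : Set A := {z | a ∈ intv T z b}

/-- `x = max^P(B)`: `x` is `P`'s best alternative of `B`. -/
def IsBestOf (P : Pref A) (x : A) (B : Set A) : Prop :=
  x ∈ B ∧ ∀ y ∈ B, y ≠ x → prefers P x y

/-- `a` and `b` are dual-thresholds in the tree `T`. -/
def DualThresholds (T : SimpleGraph A) (a b : A) : Prop :=
  a ≠ b ∧ ∀ c : A, c ∉ intv T a b →
    projOn T (intv T a b) c = a ∨ projOn T (intv T a b) c = b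

/-- An `(a,b)`-semi-hybrid preference on `T`. -/
def SemiHybridPref (T : SimpleGraph A) (a b : A) (P : Pref A) : Prop :=
  (peak P ∈ sideSet T a b \ {a} → SemiSP T a P ∧ IsBestOf P b (sideSet T b a)) ∧
  (peak P ∈ sideSet T b a \ {b} → SemiSP T b P ∧ IsBestOf P a (sideSet T a b)) ∧
  (peak P ∈ intv T a b → IsBestOf P a (sideSet T a b) ∧ IsBestOf P b (sideSet T b a))

/-- `x` is a leaf of the subgraph of `G` induced on `B`. -/
def IsLeafOn (G : SimpleGraph A) (B : Set A) (x : A) : Prop :=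
  x ∈ B ∧ ∃! y, y ∈ B ∧ G.Adj x y

/-- `D` is an `(a,b)`-semi-hybrid domain on the tree `T`. -/
def SemiHybridDomainOn (D : Set (Pref A)) (T : SimpleGraph A) (a b : A) : Prop :=
  T.IsTree ∧ DualThresholds T a b ∧ D ⊆ {P | SemiHybridPref T a b P} ∧
  (adjGraph D).Connected ∧
  (¬ ∃ (T' : SimpleGraph A) (a' b' : A), T'.IsTree ∧ DualThresholds T' a' b' ∧
      D ⊆ {P | SemiHybridPref T' a' b' P} ∧ intv T' a' b' ⊂ intv T a b) ∧
  ((adjGraph D).IsTree →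
    ∀ x : A, IsLeafOn (adjGraph D) (intv T a b) x →
      ∃ P ∈ D, ¬ SemiSP (adjGraph D) x P)

/-- `D` is a semi-hybrid domain. -/
def SemiHybridDomain (D : Set (Pref A)) : Prop :=
  ∃ (T : SimpleGraph A) (a b : A), SemiHybridDomainOn D T a b

/-- An `(a,b)`-hybrid preference on `T`. -/
def HybridPref (T : SimpleGraph A) (a b : A) (P : Pref A) : Prop :=
  (∀ y z : A, ((y ∈ sideSet T a b ∧ z ∈ sideSet T a b) ∨
      (y ∈ sideSet T b a ∧ z ∈ sideSet T b a)) → y ≠ z →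
    y ∈ intv T (peak P) z → prefers P y z) ∧
  (peak P ∈ sideSet T a b \ {a} → IsBestOf P a (intv T a b)) ∧
  (peak P ∈ sideSet T b a \ {b} → IsBestOf P b (intv T a b))

/-- `D` is an `(a,b)`-hybrid domain on the tree `T`. -/
def HybridDomainOn (D : Set (Pref A)) (T : SimpleGraph A) (a b : A) : Prop :=
  T.IsTree ∧ DualThresholds T a b ∧ D ⊆ {P | HybridPref T a b P} ∧
  (adjGraph D).Connected ∧
  (¬ ∃ (T' : SimpleGraph A) (a' b' : A), T'.IsTree ∧ DualThresholds T' a' b' ∧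
      D ⊆ {P | HybridPref T' a' b' P} ∧ intv T' a' b' ⊂ intv T a b) ∧
  3 ≤ (intv T a b).ncard

/-- `f` is an `(a,b)`-hybrid rule on the tree `T`. -/
def IsHybridRule (D : Set (Pref A)) {n : ℕ} (f : (Fin n → Pref A) → A)
    (T : SimpleGraph A) (a b : A) : Prop :=
  T.IsTree ∧ DualThresholds T a b ∧ 3 ≤ (intv T a b).ncard ∧
  ∃ i : Fin n, ∀ P : Fin n → Pref A, InDom D P →
    (peak (P i) ∈ intv T a b → f P = peak (P i)) ∧
    (peak (P i) ∈ sideSet T a b \ {a} → f P = projOn T (gammaSet T P) a) ∧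
    (peak (P i) ∈ sideSet T b a \ {b} → f P = projOn T (gammaSet T P) b)

/-- The PNT rule on `T` w.r.t. the edge `(x, y)`, with the two distinguished voters `i, j`. -/
noncomputable def pntRule (T : SimpleGraph A) (x y : A) {n : ℕ} (i j : Fin n)
    (P : Fin n → Pref A) : A :=
  if peak (P i) ∈ sideSet T y x then peak (P i)
  else if peak (P j) ∈ sideSet T x y then projOn T (gammaSet T P) x
  else if prefers (P j) x y then x else y

/-- `(x, y)` is a critical spot in `T` for the domain `D`. -/
def CriticalSpot (D : Set (Pref A)) (T : SimpleGraph A) (x y : A) : Prop :=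
  T.Adj x y ∧
  (∀ P ∈ D, peak P ∈ sideSet T x y → SemiSP T y P) ∧
  (∀ P ∈ D, peak P ∈ sideSet T y x → IsBestOf P x (sideSet T x y)) ∧
  (∃ P ∈ D, ∃ P' ∈ D, peak P = peak P' ∧ peak P ∈ sideSet T y x ∧
    prefers P y x ∧ prefers P' x y)

/-- `x` is a path in the graph `G` (pairwise distinct, consecutive vertices adjacent). -/
def IsPathIn (G : SimpleGraph A) {v : ℕ} (x : Fin v → A) : Prop :=
  Function.Injective x ∧
  ∀ (k : ℕ) (h : k + 1 < v), G.Adj (x ⟨k, Nat.lt_of_succ_lt h⟩) (x ⟨k + 1, h⟩)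

/-- `x` is a cycle in the graph `G`. -/
def IsCycleIn (G : SimpleGraph A) {v : ℕ} (x : Fin v → A) : Prop :=
  Function.Injective x ∧
  (∀ (k : ℕ) (h : k + 1 < v), G.Adj (x ⟨k, Nat.lt_of_succ_lt h⟩) (x ⟨k + 1, h⟩)) ∧
  ∀ (h : 0 < v), G.Adj (x ⟨v - 1, Nat.sub_lt h Nat.one_pos⟩) (x ⟨0, h⟩)

/-- The line `L^A` induced by the ranking of the preference `P`. -/
noncomputable def lineOf (P : Pref A) : SimpleGraph A :=
  SimpleGraph.fromRel (fun a b =>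
    ∃ k : ℕ, k + 1 < Fintype.card A ∧ rk P k = a ∧ rk P (k + 1) = b)

/-- The median of three natural numbers. -/
def med3 (a b c : ℕ) : ℕ := max (min a b) (min (max a b) c)

/-- The two-voter profile in which voter `i` reports `Pi` and the other voter reports `Q`. -/
noncomputable def prof2 (i : Fin 2) (Pi Q : Pref A) : Fin 2 → Pref A :=
  Function.update (fun _ => Q) i Pi

/-!
Call a retraction `ρ` of the alternatives a pruning if each of its fibres is a subtree of the
adjacency graph hanging from the fixed point it contains, in a way that all the preferences respect.
The zones of semi-hybrid domains are the fixed-point sets of prunings: by diversity, the nontrivial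
fibres hang from at most two fixed points, and the other fixed points can be lined up between these
two. Minimality of the free zone therefore means that nothing more can be pruned from it.

For two voters, call an edge of the graph mixed if neither voter is decisive on it. Mixed edges,
oriented towards the winning alternative, form no cycle, and in the presence of one of them the
alternatives leading to an extremal mixed edge could be pruned as well. So on a free zone no edge is
mixed, one voter is decisive on every edge and hence on the whole zone, and merging voters into two
blocks carries this over to any number of voters. If nothing but a single vertex `x` survives the
pruning, all preferences are semi-single-peaked with respect to `x`, and choosing the meet of the
peaks in the tree rooted at `x` is anonymous and strategy-proof.

If every alternative has two seconds, every mixed edge is preceded by another mixed pair: at its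
origin there is either another neighbor or, at a leaf, the alternative supplied by leaf symmetry. So
acyclicity excludes mixed edges on the whole graph, and the domain is dictatorial.
-/

/-! ### Preferences -/

section Preferences

variable {α : Type*} [Fintype α] {P P' : Pref α} {D : Set (Pref α)} {B C : Set α} {x y z : α}

/-- Weak preference. It is an abbreviation for an inequality between ranks, so that the order
lemmas of `Fin` apply to it directly. -/
abbrev weaklyPrefers (P : Pref α) (x y : α) : Prop := P.symm x ≤ P.symm y

theorem weaklyPrefers.antisymm (hxy : weaklyPrefers P x y) (hyx : weaklyPrefers P y x) : x = y :=
  P.symm.injective (le_antisymm hxy hyx)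

theorem weaklyPrefers_iff : weaklyPrefers P x y ↔ x = y ∨ prefers P x y := by
  rw [weaklyPrefers, prefers, le_iff_eq_or_lt, P.symm.injective.eq_iff]

theorem weaklyPrefers.prefers_of_ne (h : weaklyPrefers P x y) (hne : x ≠ y) : prefers P x y :=
  (weaklyPrefers_iff.1 h).resolve_left hne

theorem prefers.weaklyPrefers (h : prefers P x y) : weaklyPrefers P x y :=
  le_of_lt h

theorem isBestOf_iff : IsBestOf P x B ↔ x ∈ B ∧ ∀ y ∈ B, weaklyPrefers P x y := by
  refine and_congr_right fun _ => forall₂_congr fun y _ => ?_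
  rw [weaklyPrefers_iff, or_iff_not_imp_left, eq_comm]

theorem IsBestOf.weaklyPrefers (h : IsBestOf P x B) (hy : y ∈ B) : weaklyPrefers P x y :=
  (isBestOf_iff.1 h).2 y hy

theorem IsBestOf.union (hB : IsBestOf P x B) (hC : IsBestOf P x C) : IsBestOf P x (B ∪ C) :=
  ⟨Or.inl hB.1, fun y hy => hy.elim (hB.2 y) (hC.2 y)⟩

theorem StrategyProof.weaklyPrefers {n : ℕ} {f : (Fin n → Pref α) → α} (hf : StrategyProof D f)
    {P : Fin n → Pref α} (hP : InDom D P) (i : Fin n) {Q : Pref α} (hQ : Q ∈ D) :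
    weaklyPrefers (P i) (f P) (f (Function.update P i Q)) :=
  weaklyPrefers_iff.2 (hf P hP i Q hQ)

section Ranks

variable [Nonempty α]

theorem rk_symm_apply (P : Pref α) (x : α) : rk P (P.symm x) = x := by
  simp [rk]

theorem symm_rk {k : ℕ} (P : Pref α) (hk : k < Fintype.card α) : (P.symm (rk P k) : ℕ) = k := by
  simp [rk, hk]

theorem symm_peak (P : Pref α) : (P.symm (peak P) : ℕ) = 0 :=
  symm_rk P Fintype.card_pos

theorem peak_weaklyPrefers (P : Pref α) (x : α) : weaklyPrefers P (peak P) x := by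
  rw [weaklyPrefers, Fin.le_def, symm_peak]
  exact Nat.zero_le _

theorem weaklyPrefers.eq_peak (h : weaklyPrefers P x (peak P)) : x = peak P :=
  h.antisymm (peak_weaklyPrefers P x)

theorem symm_eq_symm_of_rk_eq (h : ∀ k, 2 ≤ k → rk P k = rk P' k) (hx : 2 ≤ (P.symm x : ℕ)) :
    (P'.symm x : ℕ) = P.symm x := by
  have hrk := h _ hx
  rw [rk_symm_apply] at hrk
  conv_lhs => rw [hrk]
  exact symm_rk P' (P.symm x).isLt

end Ranks

section Seconds

variable [Nontrivial α]

theorem symm_second (P : Pref α) : (P.symm (second P) : ℕ) = 1 :=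
  symm_rk P Fintype.one_lt_card

theorem peak_ne_second (P : Pref α) : peak P ≠ second P := fun h => by
  have := congrArg (fun x => (P.symm x : ℕ)) h
  simp only [symm_peak, symm_second] at this
  omega

theorem second_weaklyPrefers (hx : x ≠ peak P) : weaklyPrefers P (second P) x := by
  have hpos := (peak_weaklyPrefers P x).prefers_of_ne hx.symm
  rw [prefers, Fin.lt_def, symm_peak] at hpos
  rwa [weaklyPrefers, Fin.le_def, symm_second]

theorem weaklyPrefers.eq_peak_or_eq_second (h : weaklyPrefers P x (second P)) :
    x = peak P ∨ x = second P :=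
  or_iff_not_imp_left.2 fun hx => h.antisymm (second_weaklyPrefers hx)

theorem second_eq_of_isBestOf (h : IsBestOf P x B) (hpeak : peak P ∉ B) (hsecond : second P ∈ B) :
    second P = x :=
  (second_weaklyPrefers fun hx => hpeak (hx ▸ h.1)).antisymm (h.weaklyPrefers hsecond)

theorem eq_or_eq_peak_and_eq_second (hrk : ∀ k, 2 ≤ k → rk P k = rk P' k)
    (hxy : weaklyPrefers P x y) (hyx : weaklyPrefers P' y x) :
    x = y ∨ x = peak P ∧ y = second P := by
  have hy := fun h => symm_eq_symm_of_rk_eq (x := y) hrk h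
  have hx := fun h => symm_eq_symm_of_rk_eq (x := x) hrk h
  have hx' := fun h => symm_eq_symm_of_rk_eq (x := x) (fun k hk => (hrk k hk).symm) h
  by_cases hxy_eq : x = y
  · exact Or.inl hxy_eq
  have hlt := hxy.prefers_of_ne hxy_eq
  have hlt' := hyx.prefers_of_ne (Ne.symm hxy_eq)
  rw [prefers, Fin.lt_def] at hlt hlt'
  refine Or.inr ⟨P.symm.injective (Fin.ext ?_), P.symm.injective (Fin.ext ?_)⟩
  · rw [symm_peak]; omega
  · rw [symm_second]; omega

theorem DomAdjacent.symm (h : DomAdjacent D x y) : DomAdjacent D y x := by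
  obtain ⟨P, hP, P', hP', h1, h2, h3, h4, h5⟩ := h
  exact ⟨P', hP', P, hP, h3, h4, h1, h2, fun k hk => (h5 k hk).symm⟩

theorem adjGraph_adj : (adjGraph D).Adj x y ↔ DomAdjacent D x y := by
  rw [adjGraph, SimpleGraph.fromRel_adj]
  constructor
  · rintro ⟨-, h | h⟩
    exacts [h, h.symm]
  · intro h
    refine ⟨?_, Or.inl h⟩
    obtain ⟨P, -, -, -, rfl, rfl, -⟩ := h
    exact peak_ne_second P

theorem exists_peak_second_of_adj (h : (adjGraph D).Adj x y) :
    ∃ P ∈ D, peak P = x ∧ second P = y := by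
  obtain ⟨P, hP, -, -, hx, hy, -⟩ := adjGraph_adj.1 h
  exact ⟨P, hP, hx, hy⟩

theorem minimallyRich_of_connected (hD : (adjGraph D).Connected) : MinimallyRich D := by
  intro a
  obtain ⟨b, hab⟩ := hD.preconnected.exists_adj_of_nontrivial a
  obtain ⟨P, hP, hpeak, -⟩ := exists_peak_second_of_adj hab
  exact ⟨P, hP, hpeak⟩

end Seconds

end Preferences

/-! ### Edge cuts and intervals in graphs -/

section EdgeCuts

variable {V : Type*} {H : SimpleGraph V} {U : Set V} {s t x y : V}

/-- `s t` is the only edge of `H` between `U` and its complement, with `s` in `U`. The edge is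
oriented so that a cut can be read as a branch `U` attached to the rest of the graph at `t`. -/
structure IsEdgeCut (H : SimpleGraph V) (U : Set V) (s t : V) : Prop where
  left_mem : s ∈ U
  right_notMem : t ∉ U
  adj : H.Adj s t
  eq_of_adj : ∀ x ∈ U, ∀ y ∉ U, H.Adj x y → x = s ∧ y = t

theorem IsEdgeCut.compl (h : IsEdgeCut H U s t) : IsEdgeCut H Uᶜ t s where
  left_mem := h.right_notMem
  right_notMem := not_not_intro h.left_mem
  adj := h.adj.symm
  eq_of_adj x hx y hy hxy := (h.eq_of_adj y (not_not.1 hy) x hx hxy.symm).symm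

theorem exists_adj_of_mem_of_notMem (hH : H.Connected) (hx : x ∈ U) (hy : y ∉ U) :
    ∃ p ∈ U, ∃ q ∉ U, H.Adj p q := by
  obtain ⟨p⟩ := hH.preconnected x y
  obtain ⟨d, -, hfst, hsnd⟩ := p.exists_boundary_dart U hx hy
  exact ⟨d.fst, hfst, d.snd, hsnd, d.adj⟩

theorem dist_le_dist_add_one (hH : H.Connected) (h : H.Adj x y) (z : V) :
    H.dist x z ≤ H.dist y z + 1 := by
  have := hH.dist_triangle (u := x) (v := y) (w := z)
  rw [SimpleGraph.dist_eq_one_iff_adj.2 h] at this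
  omega

theorem IsEdgeCut.dist_add_le_length (hH : H.Connected) (h : IsEdgeCut H U s t)
    (p : H.Walk x y) (hx : x ∈ U) (hy : y ∉ U) :
    H.dist x s + 1 + H.dist t y ≤ p.length := by
  induction p with
  | nil => exact absurd hx hy
  | @cons x z y hxz p ih =>
    rw [SimpleGraph.Walk.length_cons]
    by_cases hz : z ∈ U
    · have := ih hz hy
      have := dist_le_dist_add_one hH hxz s
      omega
    · obtain ⟨rfl, rfl⟩ := h.eq_of_adj x hx z hz hxz
      have := SimpleGraph.dist_le p
      rw [SimpleGraph.dist_self]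
      omega

theorem IsEdgeCut.dist_eq (h : IsEdgeCut H U s t) (hH : H.Connected) (hx : x ∈ U) (hy : y ∉ U) :
    H.dist x y = H.dist x s + 1 + H.dist t y := by
  obtain ⟨p, hp⟩ := hH.exists_walk_length_eq_dist x y
  have hge := h.dist_add_le_length hH p hx hy
  have htri := hH.dist_triangle (u := x) (v := s) (w := y)
  have hst := dist_le_dist_add_one hH h.adj y
  omega

theorem IsEdgeCut.dist_eq' (h : IsEdgeCut H U s t) (hH : H.Connected) (hx : x ∉ U) (hy : y ∈ U) :
    H.dist x y = H.dist x t + 1 + H.dist s y :=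
  h.compl.dist_eq hH hx (not_not_intro hy)

theorem IsEdgeCut.dist_left (h : IsEdgeCut H U s t) (hH : H.Connected) (hy : y ∉ U) :
    H.dist s y = H.dist t y + 1 := by
  rw [h.dist_eq hH h.left_mem hy, SimpleGraph.dist_self, zero_add, add_comm]

theorem IsEdgeCut.mem_iff (h : IsEdgeCut H U s t) (hH : H.Connected) :
    x ∈ U ↔ H.dist x s < H.dist x t := by
  rw [H.dist_comm, H.dist_comm (v := t)]
  refine ⟨fun hx => ?_, fun hlt => by_contra fun hx => ?_⟩
  · have := h.compl.dist_left hH (not_not_intro hx)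
    omega
  · have := h.dist_left hH hx
    omega

theorem IsEdgeCut.unique {U' : Set V} (h : IsEdgeCut H U s t) (h' : IsEdgeCut H U' s t)
    (hH : H.Connected) : U = U' := by
  ext x
  rw [h.mem_iff hH, h'.mem_iff hH]

theorem exists_isEdgeCut_of_isTree (hH : H.IsTree) (hst : H.Adj s t) :
    ∃ U, IsEdgeCut H U s t := by
  have hbridge := SimpleGraph.isAcyclic_iff_forall_adj_isBridge.1 hH.isAcyclic hst
  rw [SimpleGraph.isBridge_iff] at hbridge
  refine ⟨{x | (H.deleteEdges {s(s, t)}).Reachable s x}, .refl _, hbridge, hst, ?_⟩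
  intro x hx y hy hxy
  have hedge : s(x, y) = s(s, t) := by
    by_contra hne
    have hadj : (H.deleteEdges {s(s, t)}).Adj x y := SimpleGraph.deleteEdges_adj.2 ⟨hxy, hne⟩
    exact hy (SimpleGraph.Reachable.trans hx hadj.reachable)
  rcases Sym2.eq_iff.1 hedge with h | ⟨rfl, rfl⟩
  · exact h
  · exact absurd hx hbridge

theorem isTree_of_exists_isEdgeCut (hH : H.Connected)
    (h : ∀ s t, H.Adj s t → ∃ U, IsEdgeCut H U s t) : H.IsTree := by
  refine ⟨hH, SimpleGraph.isAcyclic_iff_forall_adj_isBridge.2 fun s t hst => ?_⟩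
  rw [SimpleGraph.isBridge_iff]
  obtain ⟨U, hU⟩ := h s t hst
  rintro ⟨p⟩
  obtain ⟨d, -, hfst, hsnd⟩ := p.exists_boundary_dart U hU.left_mem hU.right_notMem
  obtain ⟨hadj, hne⟩ := SimpleGraph.deleteEdges_adj.1 d.adj
  obtain ⟨h1, h2⟩ := hU.eq_of_adj _ hfst _ hsnd hadj
  exact hne (by rw [h1, h2]; rfl)

theorem exists_adj_dist_lt (hH : H.Connected) (hne : x ≠ y) :
    ∃ z, H.Adj x z ∧ H.dist z y < H.dist x y := by
  obtain ⟨p, hp⟩ := hH.exists_walk_length_eq_dist x y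
  cases p with
  | nil => exact absurd rfl hne
  | @cons _ z _ hxz p =>
    refine ⟨z, hxz, ?_⟩
    rw [SimpleGraph.Walk.length_cons] at hp
    have := SimpleGraph.dist_le p
    omega

theorem exists_isEdgeCut_toward (hH : H.IsTree) (hne : x ≠ y) :
    ∃ U t, IsEdgeCut H U x t ∧ y ∉ U := by
  obtain ⟨t, hxt, hlt⟩ := exists_adj_dist_lt hH.connected hne
  obtain ⟨U, hU⟩ := exists_isEdgeCut_of_isTree hH hxt
  refine ⟨U, t, hU, ?_⟩
  rw [hU.mem_iff hH.connected, H.dist_comm, H.dist_comm (v := t)]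
  omega

theorem IsEdgeCut.induction (h : IsEdgeCut H U s t) (hH : H.Connected) {motive : V → Prop}
    (base : motive s) (step : ∀ p ∈ U, ∀ q ∈ U, H.Adj p q → motive q → motive p) :
    ∀ p ∈ U, motive p := by
  intro p hp
  induction hd : H.dist p s using Nat.strong_induction_on generalizing p with
  | _ n ih =>
    subst hd
    by_cases hps : p = s
    · exact hps ▸ base
    · obtain ⟨q, hpq, hlt⟩ := exists_adj_dist_lt hH hps
      have hq : q ∈ U := by_contra fun hq => hps (h.eq_of_adj p hp q hq hpq).1
      exact step p hp q hq hpq (ih _ hlt q hq rfl)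

end EdgeCuts

section Intervals

variable {V : Type*} {T : SimpleGraph V} {U : Set V} {s t x y z : V}

theorem mem_intv : z ∈ intv T x y ↔ T.dist x z + T.dist z y = T.dist x y :=
  Iff.rfl

theorem intv_comm (x y : V) : intv T x y = intv T y x := by
  ext z
  rw [mem_intv, mem_intv, T.dist_comm (u := y) (v := x), T.dist_comm (u := y) (v := z),
    T.dist_comm (u := z) (v := x), add_comm]

theorem left_mem_intv (x y : V) : x ∈ intv T x y := by
  rw [mem_intv, SimpleGraph.dist_self, zero_add]

theorem right_mem_intv (x y : V) : y ∈ intv T x y := by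
  rw [mem_intv, SimpleGraph.dist_self, add_zero]

theorem IsEdgeCut.mem_or_mem_of_mem_intv (hU : IsEdgeCut T U s t) (hT : T.Connected)
    (h : z ∈ intv T x y) (hz : z ∈ U) : x ∈ U ∨ y ∈ U := by
  by_contra! hxy
  rw [mem_intv, hU.dist_eq' hT hxy.1 hz, hU.dist_eq hT hz hxy.2] at h
  have := hT.dist_triangle (u := x) (v := t) (w := y)
  omega

theorem IsEdgeCut.right_mem_intv (hU : IsEdgeCut T U s t) (hT : T.Connected) (hx : x ∈ U)
    (hy : y ∉ U) : t ∈ intv T x y := by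
  rw [mem_intv, hU.dist_eq hT hx hy, hU.dist_eq hT hx hU.right_notMem, SimpleGraph.dist_self]

theorem mem_intv_of_forall_isEdgeCut (hT : T.IsTree)
    (h : ∀ U s t, IsEdgeCut T U s t → z ∈ U → x ∈ U ∨ y ∈ U) : z ∈ intv T x y := by
  have hc := hT.connected
  induction hd : T.dist x z generalizing x with
  | zero =>
    rw [hc.dist_eq_zero_iff] at hd
    exact hd ▸ left_mem_intv _ _
  | succ n ih =>
    have hxz : x ≠ z := by
      rintro rfl
      rw [SimpleGraph.dist_self] at hd
      omega
    obtain ⟨U, x', hU, hzU⟩ := exists_isEdgeCut_toward hT hxz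
    have hyU : y ∉ U := (h _ _ _ hU.compl hzU).resolve_left (not_not_intro hU.left_mem)
    have hx'z := hU.dist_left hc hzU
    have hx'y := hU.dist_left hc hyU
    have hmem : z ∈ intv T x' y := by
      refine ih (fun U' s t hU' hz => ?_) (by omega)
      refine (h _ _ _ hU' hz).imp_left fun hx => by_contra fun hx' => ?_
      obtain ⟨rfl, rfl⟩ := hU'.eq_of_adj x hx x' hx' hU.adj
      exact hzU (hU.unique hU' hc ▸ hz)
    rw [mem_intv] at hmem ⊢
    omega

theorem mem_intv_iff_forall_isEdgeCut (hT : T.IsTree) :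
    z ∈ intv T x y ↔ ∀ U s t, IsEdgeCut T U s t → z ∈ U → x ∈ U ∨ y ∈ U :=
  ⟨fun h _ _ _ hU => hU.mem_or_mem_of_mem_intv hT.connected h, mem_intv_of_forall_isEdgeCut hT⟩

theorem exists_isProjPt_intv [Finite V] (hT : T.IsTree) (x y z : V) :
    ∃ c, IsProjPt T (intv T x y) z c := by
  have hc := hT.connected
  obtain ⟨c, hcB, hmin⟩ := Set.exists_min_image (intv T x y) (fun w => T.dist z w)
    (Set.toFinite _) ⟨x, left_mem_intv _ _⟩
  refine ⟨c, hcB, fun b hb => (mem_intv_iff_forall_isEdgeCut hT).2 fun U s t hU hcU => ?_⟩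
  by_contra! hzb
  -- Otherwise `t` would be a vertex of the interval closer to `z` than `c`.
  have ht : t ∈ intv T x y := by
    rcases hU.mem_or_mem_of_mem_intv hc hcB hcU with h | h <;>
      rcases hU.compl.mem_or_mem_of_mem_intv hc hb hzb.2 with h' | h'
    · exact absurd h h'
    · exact hU.right_mem_intv hc h h'
    · exact intv_comm (T := T) y x ▸ hU.right_mem_intv hc h h'
    · exact absurd h h'
  have hle := hmin t ht
  have hdist := hU.dist_eq' hc hzb.1 hcU
  omega

theorem isProjPt_projOn_intv [Fintype V] (hT : T.IsTree) (x y z : V) :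
    IsProjPt T (intv T x y) z (projOn T (intv T x y) z) := by
  have h := exists_isProjPt_intv hT x y z
  rw [projOn, dif_pos h]
  exact h.choose_spec

end Intervals

section SemiSinglePeaked

variable {α : Type*} [Fintype α] [Nonempty α] {T : SimpleGraph α} {P : Pref α} {x c d : α}

theorem SemiSP.isBestOf_compl (hP : SemiSP T x P) (hT : T.IsTree) {U : Set α} {s t : α}
    (hU : IsEdgeCut T U s t) (hx : x ∉ U) (hpeak : peak P ∈ U) : IsBestOf P t Uᶜ := by
  have hc := hT.connected
  have ht := hU.right_mem_intv hc hpeak hx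
  have hpath : ∀ c ∉ U, c ∈ intv T (peak P) x → weaklyPrefers P t c := fun c hcU hcx =>
    weaklyPrefers_iff.2 <| or_iff_not_imp_left.2 fun hne =>
      hP.1 t c ht hcx hne (hU.right_mem_intv hc hpeak hcU)
  refine isBestOf_iff.2 ⟨hU.right_notMem, fun c hcU => ?_⟩
  by_cases hcx : c ∈ intv T (peak P) x
  · exact hpath c hcU hcx
  · have hproj := isProjPt_projOn_intv hT (peak P) x c
    have hprojU : projOn T (intv T (peak P) x) c ∉ U := fun h =>
      (hU.mem_or_mem_of_mem_intv hc (hproj.2 t ht) h).elim hcU hU.right_notMem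
    exact (hpath _ hprojU hproj.1).trans (hP.2 c hcx).weaklyPrefers

theorem weaklyPrefers_of_isBestOf_compl (hT : T.IsTree)
    (hP : ∀ U s t, IsEdgeCut T U s t → x ∉ U → peak P ∈ U → IsBestOf P t Uᶜ)
    (hcx : c ∈ intv T (peak P) x) (hcd : c ∈ intv T (peak P) d) : weaklyPrefers P c d := by
  by_cases hc : c = peak P
  · exact hc ▸ peak_weaklyPrefers P d
  obtain ⟨U, s, hU, hpeak⟩ := exists_isEdgeCut_toward hT hc
  have hxU := (hU.mem_or_mem_of_mem_intv hT.connected hcx hU.left_mem).resolve_left hpeak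
  have hdU := (hU.mem_or_mem_of_mem_intv hT.connected hcd hU.left_mem).resolve_left hpeak
  exact (hP Uᶜ s c hU.compl (not_not_intro hxU) hpeak).weaklyPrefers (not_not_intro hdU)

theorem semiSP_iff_forall_isEdgeCut (hT : T.IsTree) :
    SemiSP T x P ↔ ∀ U s t, IsEdgeCut T U s t → x ∉ U → peak P ∈ U → IsBestOf P t Uᶜ := by
  refine ⟨fun hP U s t hU => hP.isBestOf_compl hT hU, fun hP => ⟨?_, fun c hcx => ?_⟩⟩
  · exact fun c d hcx _ hne hcd => (weaklyPrefers_of_isBestOf_compl hT hP hcx hcd).prefers_of_ne hne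
  · have hproj := isProjPt_projOn_intv hT (peak P) x c
    have hmem := intv_comm (T := T) _ _ ▸ hproj.2 _ (left_mem_intv _ _)
    exact (weaklyPrefers_of_isBestOf_compl hT hP hproj.1 hmem).prefers_of_ne
      fun h => hcx (h ▸ hproj.1)

theorem SemiSP.weaklyPrefers_of_mem_intv (hP : SemiSP T x P) (hT : T.IsTree)
    (hcx : c ∈ intv T (peak P) x) (hcd : c ∈ intv T (peak P) d) : weaklyPrefers P c d :=
  weaklyPrefers_of_isBestOf_compl hT ((semiSP_iff_forall_isEdgeCut hT).1 hP) hcx hcd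

end SemiSinglePeaked

/-! ### Arcs and hanging subtrees -/

section Hanging

variable {α : Type*} [Fintype α] [Nonempty α] {D : Set (Pref α)} {S S' U : Set α}
  {s t v p x y c : α}

/-- An edge cut of the adjacency graph which the preferences respect: every preference peaking in
the branch `U` likes its attachment point `t` best among the alternatives outside `U`. -/
structure IsArc (D : Set (Pref α)) (U : Set α) (s t : α) : Prop
    extends IsEdgeCut (adjGraph D) U s t where
  isBestOf : ∀ P ∈ D, peak P ∈ U → IsBestOf P t Uᶜ

/-- `S` hangs from `v`: it is a subtree of the adjacency graph attached to the rest at `v`, all of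
whose edges are arcs oriented towards `v`, and `v` is the best alternative of `S` for every
preference peaking outside `S`. -/
structure HangsFrom (D : Set (Pref α)) (S : Set α) (v : α) : Prop where
  mem : v ∈ S
  exists_isArc : ∀ x ∈ S, x ≠ v → ∃ U t, t ∈ S ∧ IsArc D U x t ∧ U ⊆ S ∧ v ∉ U
  isBestOf : ∀ P ∈ D, peak P ∉ S → IsBestOf P v S

theorem hangsFrom_singleton (v : α) : HangsFrom D {v} v where
  mem := rfl
  exists_isArc _ hx hne := absurd hx hne
  isBestOf _ _ _ := ⟨rfl, fun _ hy hne => absurd hy hne⟩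

theorem HangsFrom.union (h : HangsFrom D S v) (h' : HangsFrom D S' v) :
    HangsFrom D (S ∪ S') v where
  mem := Or.inl h.mem
  exists_isArc := by
    rintro x (hx | hx) hne
    · obtain ⟨U, t, ht, hU, hUS, hv⟩ := h.exists_isArc x hx hne
      exact ⟨U, t, Or.inl ht, hU, fun _ hz => Or.inl (hUS hz), hv⟩
    · obtain ⟨U, t, ht, hU, hUS, hv⟩ := h'.exists_isArc x hx hne
      exact ⟨U, t, Or.inr ht, hU, fun _ hz => Or.inr (hUS hz), hv⟩
  isBestOf P hP hpeak :=
    (h.isBestOf P hP fun hS => hpeak (Or.inl hS)).union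
      (h'.isBestOf P hP fun hS => hpeak (Or.inr hS))

theorem HangsFrom.mem_of_adj (h : HangsFrom D S v) (hx : x ∈ S) (hne : x ≠ v)
    (hxy : (adjGraph D).Adj x y) : y ∈ S := by
  obtain ⟨U, t, ht, hU, hUS, -⟩ := h.exists_isArc x hx hne
  by_cases hy : y ∈ U
  · exact hUS hy
  · rwa [(hU.eq_of_adj x hU.left_mem y hy hxy).2]

theorem HangsFrom.exists_isArc_of_mem (h : HangsFrom D S v) (hD : (adjGraph D).Connected)
    (hp : p ∈ S) (hne : p ≠ v) : ∃ U x, x ∈ S ∧ IsArc D U x v ∧ p ∈ U ∧ U ⊆ S ∧ v ∉ U := by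
  induction hd : (adjGraph D).dist p v generalizing p with
  | zero => exact absurd (hD.dist_eq_zero_iff.1 hd) hne
  | succ n ih =>
    obtain ⟨U, t, ht, hU, hUS, hv⟩ := h.exists_isArc p hp hne
    by_cases htv : t = v
    · subst htv
      exact ⟨U, p, hp, hU, hU.left_mem, hUS, hv⟩
    · have hdist := hU.dist_left hD hv
      obtain ⟨U', x, hx, hU', htU', hU'S, hv'⟩ := ih ht htv (by omega)
      refine ⟨U', x, hx, hU', by_contra fun hpU' => ?_, hU'S, hv'⟩
      exact hne (hU'.eq_of_adj t htU' p hpU' hU.adj.symm).2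

theorem HangsFrom.prefers_of_notMem (h : HangsFrom D S v) (hD : (adjGraph D).Connected)
    {P : Pref α} (hP : P ∈ D) (hpeak : peak P ∈ S) (hne : peak P ≠ v) (hc : c ∉ S) :
    prefers P v c := by
  obtain ⟨U, x, -, hU, hpU, hUS, -⟩ := h.exists_isArc_of_mem hD hpeak hne
  exact (hU.isBestOf P hP hpU).2 c (fun hcU => hc (hUS hcU)) fun hcv => hc (hcv ▸ h.mem)

theorem HangsFrom.exists_isArc_of_adj (h : HangsFrom D S v) (hD : (adjGraph D).Connected)
    (hs : s ∈ S) (hne : s ≠ v) (hst : (adjGraph D).Adj s t) :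
    ∃ U, (IsArc D U s t ∨ IsArc D U t s) ∧ U ⊆ S ∧ v ∉ U := by
  obtain ⟨U, t', -, hU, hUS, hv⟩ := h.exists_isArc s hs hne
  by_cases ht : t ∈ U
  · obtain ⟨U', s', -, hU', hU'S, hv'⟩ := h.exists_isArc t (hUS ht) fun htv => hv (htv ▸ ht)
    have hs : s ∉ U' := fun hs => by
      have htv := hU.dist_eq hD ht hv
      have hsv := hU'.dist_eq hD hs hv'
      have hsv' := hU.dist_left hD hv
      have htv' := hU'.dist_left hD hv'
      have hpos := hD.pos_dist_of_ne hst.ne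
      omega
    obtain rfl := (hU'.eq_of_adj t hU'.left_mem s hs hst.symm).2
    exact ⟨U', Or.inr hU', hU'S, hv'⟩
  · obtain rfl := (hU.eq_of_adj s hU.left_mem t ht hst).2
    exact ⟨U, Or.inl hU, hUS, hv⟩

theorem HangsFrom.isTree_of_univ (h : HangsFrom D Set.univ v) (hD : (adjGraph D).Connected) :
    (adjGraph D).IsTree := by
  have hcut : ∀ s t, s ≠ v → (adjGraph D).Adj s t → ∃ U, IsEdgeCut (adjGraph D) U s t := by
    intro s t hne hst
    obtain ⟨U, hU | hU, -⟩ := h.exists_isArc_of_adj hD trivial hne hst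
    exacts [⟨U, hU.toIsEdgeCut⟩, ⟨Uᶜ, hU.toIsEdgeCut.compl⟩]
  refine isTree_of_exists_isEdgeCut hD fun s t hst => ?_
  by_cases hs : s = v
  · obtain ⟨U, hU⟩ := hcut t s (hs ▸ hst.ne') hst.symm
    exact ⟨Uᶜ, hU.compl⟩
  · exact hcut s t hs hst

theorem HangsFrom.semiSP_of_univ (h : HangsFrom D Set.univ v) (hD : (adjGraph D).Connected)
    {P : Pref α} (hP : P ∈ D) : SemiSP (adjGraph D) v P := by
  refine (semiSP_iff_forall_isEdgeCut (h.isTree_of_univ hD)).2 fun U s t hU hv hpeak => ?_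
  have hne : s ≠ v := fun hsv => hv (hsv ▸ hU.left_mem)
  obtain ⟨U', hU' | hU', -, hv'⟩ := h.exists_isArc_of_adj hD trivial hne hU.adj
  · rw [hU.unique hU'.toIsEdgeCut hD] at hpeak ⊢
    exact hU'.isBestOf P hP hpeak
  · exact absurd (hU.unique hU'.toIsEdgeCut.compl hD ▸ hv') hv

end Hanging

section SemiHybrid

variable {α : Type*} {T : SimpleGraph α} {U : Set α} {a b c s t p q x : α}

theorem mem_sideSet : x ∈ sideSet T a b ↔ T.dist x a + T.dist a b = T.dist x b :=
  Iff.rfl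

theorem left_mem_sideSet (a b : α) : a ∈ sideSet T a b :=
  left_mem_intv a b

theorem eq_of_mem_intv_of_mem_sideSet (hT : T.Connected) (hx : x ∈ intv T a b)
    (hxa : x ∈ sideSet T a b) : x = a := by
  rw [mem_intv, T.dist_comm] at hx
  rw [mem_sideSet] at hxa
  exact hT.dist_eq_zero_iff.1 (by omega)

theorem disjoint_sideSet (hT : T.Connected) (hab : a ≠ b) :
    Disjoint (sideSet T a b) (sideSet T b a) := by
  rw [Set.disjoint_left]
  intro x hxa hxb
  rw [mem_sideSet] at hxa hxb
  have := hT.pos_dist_of_ne hab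
  omega

theorem exists_isEdgeCut_of_mem_sideSet (hT : T.IsTree) (hx : x ∈ sideSet T a b) (hne : x ≠ a) :
    ∃ U t, t ∈ sideSet T a b ∧ IsEdgeCut T U x t ∧ U ⊆ sideSet T a b ∧ a ∉ U := by
  have hc := hT.connected
  obtain ⟨U, t, hU, ha⟩ := exists_isEdgeCut_toward hT hne
  have hb : b ∉ U :=
    (hU.compl.mem_or_mem_of_mem_intv hc hx ha).resolve_left (not_not_intro hU.left_mem)
  have ht : t ∈ sideSet T a b := by
    rw [mem_sideSet, hU.dist_left hc ha, hU.dist_left hc hb] at hx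
    rw [mem_sideSet]
    omega
  refine ⟨U, t, ht, hU, fun y hy => ?_, ha⟩
  rw [mem_sideSet] at ht ⊢
  rw [hU.dist_eq hc hy ha, hU.dist_eq hc hy hb]
  omega

theorem IsEdgeCut.sideSet_eq (hU : IsEdgeCut T U a t) (hT : T.Connected) (hb : b ∉ U) :
    sideSet T a b = U := by
  ext x
  rw [mem_sideSet, hU.dist_left hT hb]
  by_cases hx : x ∈ U
  · exact iff_of_true (by rw [hU.dist_eq hT hx hb]; omega) hx
  · refine iff_of_false (fun h => ?_) hx
    have hxv := hU.compl.dist_eq hT hx (not_not_intro hU.left_mem)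
    have := hT.dist_triangle (u := x) (v := t) (w := b)
    omega

variable [Fintype α]

theorem DualThresholds.symm (h : DualThresholds T a b) : DualThresholds T b a := by
  refine ⟨h.1.symm, fun c hc => ?_⟩
  rw [intv_comm] at hc ⊢
  exact (h.2 c hc).symm

theorem DualThresholds.mem_intv_or_mem_sideSet (h : DualThresholds T a b) (hT : T.IsTree)
    (c : α) : c ∈ intv T a b ∨ c ∈ sideSet T a b ∨ c ∈ sideSet T b a := by
  by_cases hc : c ∈ intv T a b
  · exact Or.inl hc
  have hproj := isProjPt_projOn_intv hT a b c
  refine Or.inr ((h.2 c hc).imp (fun hca => ?_) fun hcb => ?_)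
  · exact (hca ▸ hproj).2 b (right_mem_intv _ _)
  · exact (hcb ▸ hproj).2 a (left_mem_intv _ _)

theorem dualThresholds_of_forall_mem (hT : T.IsTree) (hab : a ≠ b)
    (h : ∀ c ∉ intv T a b, c ∈ sideSet T a b ∨ c ∈ sideSet T b a) : DualThresholds T a b := by
  have hc := hT.connected
  refine ⟨hab, fun c hcab => ?_⟩
  have hproj := isProjPt_projOn_intv hT a b c
  have hca := hproj.2 a (left_mem_intv _ _)
  have hcb := hproj.2 b (right_mem_intv _ _)
  have hmem := hproj.1
  rw [mem_intv] at hca hcb hmem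
  rw [T.dist_comm (u := a)] at hmem
  have hab := T.dist_comm (u := a) (v := b)
  refine (h c hcab).imp (fun hside => ?_) fun hside => ?_ <;>
    rw [mem_sideSet] at hside <;> exact hc.dist_eq_zero_iff.1 (by omega)

variable {D : Set (Pref α)}

theorem SemiHybridPref.symm [Nonempty α] {P : Pref α} (h : SemiHybridPref T a b P) :
    SemiHybridPref T b a P :=
  ⟨h.2.1, h.1, fun hpeak => (h.2.2 (intv_comm (T := T) a b ▸ hpeak)).symm⟩

theorem DualThresholds.isBestOf_sideSet [Nonempty α] (h : DualThresholds T a b) (hT : T.IsTree)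
    {P : Pref α} (hP : SemiHybridPref T a b P) (hpeak : peak P ∉ sideSet T a b) :
    IsBestOf P a (sideSet T a b) := by
  rcases h.mem_intv_or_mem_sideSet hT (peak P) with hzone | hside | hside
  · exact (hP.2.2 hzone).1
  · exact absurd hside hpeak
  · by_cases hb : peak P = b
    · exact (hP.2.2 (hb ▸ right_mem_intv _ _)).1
    · exact (hP.2.1 ⟨hside, hb⟩).2

theorem isBestOf_compl_of_subset_sideSet [Nonempty α] (hT : T.IsTree) {P : Pref α}
    (hP : SemiHybridPref T a b P) (hU : IsEdgeCut T U s t) (hUS : U ⊆ sideSet T a b) (ha : a ∉ U)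
    (hpeak : peak P ∈ U) : IsBestOf P t Uᶜ :=
  (hP.1 ⟨hUS hpeak, fun h => ha (h ▸ hpeak)⟩).1.isBestOf_compl hT hU ha hpeak

variable [Nontrivial α]

theorem eq_of_adj_of_isBestOf_compl (hU : ∀ P ∈ D, peak P ∈ U → IsBestOf P t Uᶜ) (hp : p ∈ U)
    (hq : q ∉ U) (hpq : (adjGraph D).Adj p q) : q = t := by
  obtain ⟨P, hP, rfl, rfl⟩ := exists_peak_second_of_adj hpq
  exact second_eq_of_isBestOf (hU P hP hp) (not_not_intro hp) hq

/-- An edge of the adjacency graph leaving a branch of `T` ends at the attachment point of this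
branch, and also at that of the branch rooted at its origin: it is therefore an edge of `T`. -/
theorem IsEdgeCut.eq_of_adjGraph_adj (hU : IsEdgeCut T U x t) (hT : T.IsTree)
    (hD : ∀ P ∈ D, SemiHybridPref T a b P) (hUS : U ⊆ sideSet T a b) (ha : a ∉ U) (hp : p ∈ U)
    (hq : q ∉ U) (hpq : (adjGraph D).Adj p q) : p = x ∧ q = t := by
  have hc := hT.connected
  obtain rfl : q = t := eq_of_adj_of_isBestOf_compl
    (fun P hP => isBestOf_compl_of_subset_sideSet hT (hD P hP) hU hUS ha) hp hq hpq
  obtain ⟨U', t', -, hU', hU'S, ha'⟩ :=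
    exists_isEdgeCut_of_mem_sideSet hT (hUS hp) fun hpa => ha (hpa ▸ hp)
  have hqU' : q ∉ U' := fun hqU' => by
    have hpa := hU.dist_eq hc hp ha
    have hqa := hU'.dist_eq hc hqU' ha'
    have hpa' := hU'.dist_left hc ha'
    omega
  obtain rfl : q = t' := eq_of_adj_of_isBestOf_compl
    (fun P hP => isBestOf_compl_of_subset_sideSet hT (hD P hP) hU' hU'S ha') hU'.left_mem hqU' hpq
  exact hU.eq_of_adj p hp q hq hU'.adj

theorem DualThresholds.hangsFrom_sideSet (h : DualThresholds T a b) (hT : T.IsTree)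
    (hD : ∀ P ∈ D, SemiHybridPref T a b P) (hG : (adjGraph D).Connected) :
    HangsFrom D (sideSet T a b) a where
  mem := left_mem_sideSet a b
  exists_isArc x hx hne := by
    obtain ⟨U, t, ht, hU, hUS, ha⟩ := exists_isEdgeCut_of_mem_sideSet hT hx hne
    have hcross : ∀ p ∈ U, ∀ q ∉ U, (adjGraph D).Adj p q → p = x ∧ q = t :=
      fun p hp q hq => hU.eq_of_adjGraph_adj hT hD hUS ha hp hq
    obtain ⟨p, hp, q, hq, hpq⟩ := exists_adj_of_mem_of_notMem hG hU.left_mem ha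
    obtain ⟨rfl, rfl⟩ := hcross p hp q hq hpq
    exact ⟨U, q, ht, ⟨⟨hp, hq, hpq, hcross⟩, fun P hP =>
      isBestOf_compl_of_subset_sideSet hT (hD P hP) hU hUS ha⟩, hUS, ha⟩
  isBestOf P hP := h.isBestOf_sideSet hT (hD P hP)

end SemiHybrid

/-! ### Prunings -/

section Pruning

variable {α : Type*} [Fintype α] [Nonempty α] {D : Set (Pref α)} {ρ : α → α} {S : Set α}
  {P : Pref α} {v x y z : α}

/-- A retraction of the alternatives onto its fixed points, each of whose fibres hangs from the
fixed point it contains. The free zone of a semi-hybrid domain is the set of fixed points of the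
pruning which collapses its two sides. -/
def IsPruning (D : Set (Pref α)) (ρ : α → α) : Prop :=
  ∀ z, HangsFrom D {x | ρ x = ρ z} (ρ z)

theorem isPruning_id : IsPruning D id :=
  hangsFrom_singleton

theorem IsPruning.idem (h : IsPruning D ρ) (x : α) : ρ (ρ x) = ρ x :=
  (h x).mem

theorem IsPruning.hangsFrom (h : IsPruning D ρ) (hz : ρ z = z) : HangsFrom D {x | ρ x = z} z := by
  have := h z
  rwa [hz] at this

theorem IsPruning.eq_of_adj (h : IsPruning D ρ) (hx : ρ x ≠ x) (hxy : (adjGraph D).Adj x y) :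
    ρ y = ρ x :=
  (h x).mem_of_adj rfl hx.symm hxy

theorem IsPruning.eq_or_eq_of_adj (h : IsPruning D ρ) (hxy : (adjGraph D).Adj x y) :
    ρ x = ρ y ∨ ρ x = x ∧ ρ y = y := by
  by_cases hx : ρ x = x
  · by_cases hy : ρ y = y
    · exact Or.inr ⟨hx, hy⟩
    · exact Or.inl (h.eq_of_adj hy hxy.symm)
  · exact Or.inl (h.eq_of_adj hx hxy).symm

theorem IsPruning.exists_adj (hρ : IsPruning D ρ) (hD : (adjGraph D).Connected)
    (hnt : (Function.fixedPoints ρ).Nontrivial) (hz : ρ z = z) :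
    ∃ y, ρ y = y ∧ (adjGraph D).Adj z y := by
  obtain ⟨w, hw, hwz⟩ := hnt.exists_ne z
  obtain ⟨p, hp, q, hq, hpq⟩ := exists_adj_of_mem_of_notMem hD (U := {x | ρ x = z}) hz
    fun hρw => hwz (hw.symm.trans hρw)
  obtain ⟨hfp, hfq⟩ := (hρ.eq_or_eq_of_adj hpq).resolve_left fun heq => hq (heq.symm.trans hp)
  exact ⟨q, hfq, (hfp.symm.trans hp) ▸ hpq⟩

theorem IsPruning.weaklyPrefers (h : IsPruning D ρ) (hP : P ∈ D) (hx : ρ (peak P) ≠ ρ x) :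
    weaklyPrefers P (ρ x) x :=
  ((h x).isBestOf P hP hx).weaklyPrefers rfl

theorem IsPruning.isBestOf (h : IsPruning D ρ) (hv : ρ v = v) (hP : P ∈ D)
    (hpeak : ρ (peak P) ≠ v ∨ peak P = v) : IsBestOf P v {x | ρ x = v} := by
  rcases hpeak with hpeak | rfl
  · exact (h.hangsFrom hv).isBestOf P hP hpeak
  · exact isBestOf_iff.2 ⟨hv, fun _ _ => peak_weaklyPrefers _ _⟩

theorem IsPruning.exists_isArc_of_adj (h : IsPruning D ρ) (hD : (adjGraph D).Connected)
    (hx : ρ x ≠ x) (hxy : (adjGraph D).Adj x y) :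
    ∃ U, (IsArc D U x y ∨ IsArc D U y x) ∧ ∀ z ∈ U, ρ z ≠ z := by
  obtain ⟨U, hU, hUS, hv⟩ := (h x).exists_isArc_of_adj hD rfl hx.symm hxy
  exact ⟨U, hU, fun z hz hfix => hv ((hUS hz).symm.trans hfix ▸ hz)⟩

theorem IsPruning.piecewise (h : IsPruning D ρ) (hS : HangsFrom D S v)
    (hsat : ∀ x, ρ x ∈ S ↔ x ∈ S) : IsPruning D (S.piecewise (fun _ => v) ρ) := by
  intro z
  by_cases hz : z ∈ S
  · convert hS using 1
    · ext x
      rw [Set.mem_ofPred_eq, Set.piecewise_eq_of_mem _ _ _ hz]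
      by_cases hx : x ∈ S
      · simp only [Set.piecewise_eq_of_mem _ _ _ hx, hx]
      · rw [Set.piecewise_eq_of_notMem _ _ _ hx]
        exact iff_of_false (fun hv => hx ((hsat x).1 (hv ▸ hS.mem))) hx
    · exact Set.piecewise_eq_of_mem _ _ _ hz
  · rw [Set.piecewise_eq_of_notMem _ _ _ hz]
    convert h z using 1
    ext x
    rw [Set.mem_ofPred_eq]
    by_cases hx : x ∈ S
    · rw [Set.piecewise_eq_of_mem _ _ _ hx]
      have hρz := mt (hsat z).1 hz
      exact iff_of_false (fun hv => hρz (hv ▸ hS.mem)) fun hv => hρz (hv ▸ (hsat x).2 hx)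
    · rw [Set.piecewise_eq_of_notMem _ _ _ hx, Set.mem_ofPred_eq]

theorem mem_fixedPoints_piecewise {α : Type*} {ρ : α → α} {S : Set α} {v x : α} (hv : v ∈ S) :
    x ∈ Function.fixedPoints (S.piecewise (fun _ => v) ρ) ↔
      x = v ∨ x ∉ S ∧ x ∈ Function.fixedPoints ρ := by
  rw [Function.mem_fixedPoints_iff, Function.mem_fixedPoints_iff]
  by_cases hx : x ∈ S
  · rw [Set.piecewise_eq_of_mem _ _ _ hx]
    exact ⟨fun h => Or.inl h.symm, fun h => (h.resolve_right fun h => h.1 hx).symm⟩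
  · rw [Set.piecewise_eq_of_notMem _ _ _ hx]
    exact ⟨fun h => Or.inr ⟨hx, h⟩, fun h => (h.resolve_left fun h => hx (h ▸ hv)).2⟩

theorem HangsFrom.peak_mem_of_reversed {P' : Pref α} (h : HangsFrom D S v) (hP : P ∈ D)
    (hP' : P' ∈ D) (hrev : Reversed P P') (hx : x ∈ S) (hne : x ≠ v) :
    peak P ∈ S ∨ peak P' ∈ S := by
  by_contra! hpeak
  exact lt_asymm ((h.isBestOf P hP hpeak.1).2 x hx hne)
    ((hrev x v).2 ((h.isBestOf P' hP' hpeak.2).2 x hx hne))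

/-- Each nontrivial fibre contains one of the peaks of two completely reversed preferences. -/
theorem IsPruning.exists_eq_or_eq_of_diversity (h : IsPruning D ρ) (hD : Diversity D)
    (hρ : (Function.fixedPoints ρ).Nontrivial) :
    ∃ v w, v ≠ w ∧ ρ v = v ∧ ρ w = w ∧ ∀ x, ρ x = x ∨ ρ x = v ∨ ρ x = w := by
  obtain ⟨P, hP, P', hP', hrev⟩ := hD
  have hpeak : ∀ x, ρ x = x ∨ ρ x = ρ (peak P) ∨ ρ x = ρ (peak P') := fun x =>
    or_iff_not_imp_left.2 fun hx =>
      ((h x).peak_mem_of_reversed hP hP' hrev rfl (Ne.symm hx)).imp Eq.symm Eq.symm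
  by_cases hne : ρ (peak P) = ρ (peak P')
  · obtain ⟨w, hw, hwP⟩ := hρ.exists_ne (ρ (peak P))
    refine ⟨ρ (peak P), w, hwP.symm, h.idem _, hw, fun x => (hpeak x).imp_right fun hx => ?_⟩
    exact Or.inl (hx.elim id fun hx => hx.trans hne.symm)
  · exact ⟨_, _, hne, h.idem _, h.idem _, hpeak⟩

end Pruning

section LineGraft

variable {V : Type*} {G : SimpleGraph V} {ρ : V → V} {m : ℕ} {line : Fin (m + 1) ↪ V}
  {U : Set V} {s t : V}

/-- The graph obtained from `G` by replacing its edges between different fibres of `ρ` by the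
edges of the path `line`. -/
def lineGraft (G : SimpleGraph V) (ρ : V → V) (line : Fin (m + 1) ↪ V) : SimpleGraph V where
  Adj x y := (G.Adj x y ∧ ρ x = ρ y) ∨ ((SimpleGraph.pathGraph (m + 1)).map line).Adj x y
  symm := ⟨fun _ _ h => h.imp (fun h => ⟨h.1.symm, h.2.symm⟩) SimpleGraph.Adj.symm⟩
  loopless := ⟨fun _ h => h.elim (fun h => h.1.ne rfl) fun h => h.ne rfl⟩

theorem exists_line [Finite V] {Z : Set V} {a b : V} (ha : a ∈ Z) (hb : b ∈ Z) (hab : a ≠ b) :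
    ∃ (m : ℕ) (line : Fin (m + 2) ↪ V),
      Set.range line = Z ∧ line 0 = a ∧ line (Fin.last (m + 1)) = b := by
  have : Nontrivial Z := ⟨⟨a, ha⟩, ⟨b, hb⟩, fun h => hab (congrArg Subtype.val h)⟩
  obtain ⟨m, hm⟩ := Nat.exists_eq_add_of_le (Finite.one_lt_card (α := Z))
  let e : Fin (m + 2) ≃ Z :=
    ((Finite.equivFinOfCardEq (n := m + 2) (by omega)).symm).setValue 0 ⟨a, ha⟩
  let e' := e.setValue (Fin.last (m + 1)) ⟨b, hb⟩
  have he : e 0 = ⟨a, ha⟩ := Equiv.setValue_eq _ _ _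
  have he' : e' 0 = ⟨a, ha⟩ := by
    have hne : (0 : Fin (m + 2)) ≠ e.symm ⟨b, hb⟩ := fun h =>
      hab (congrArg Subtype.val (he.symm.trans (e.eq_symm_apply.1 h)))
    rw [← he]
    exact congrArg e (Equiv.swap_apply_of_ne_of_ne Fin.last_pos.ne hne)
  refine ⟨m, e'.toEmbedding.trans (.subtype _), ?_, congrArg Subtype.val he',
    congrArg Subtype.val (Equiv.setValue_eq e _ _)⟩
  rw [Function.Embedding.coe_trans, Equiv.coe_toEmbedding, Set.range_comp, e'.range_eq_univ,
    Set.image_univ]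
  exact Subtype.range_coe

theorem lineGraft_connected (hG : G.Connected)
    (hadj : ∀ x y, G.Adj x y → ρ x = ρ y ∨ ρ x = x ∧ ρ y = y)
    (hline : Set.range line = Function.fixedPoints ρ) : (lineGraft G ρ line).Connected := by
  let T := lineGraft G ρ line
  have hreach : ∀ i j, T.Reachable (line i) (line j) := fun i j =>
    (((SimpleGraph.pathGraph_connected m).preconnected i j).map
      (SimpleGraph.Embedding.map line _).toHom).mono fun _ _ => Or.inr
  refine SimpleGraph.connected_iff_exists_forall_reachable _ |>.2 ⟨line 0, fun x => ?_⟩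
  by_contra hx
  obtain ⟨p, hp, q, hq, hpq⟩ := exists_adj_of_mem_of_notMem hG
    (U := {x | T.Reachable (line 0) x}) (SimpleGraph.Reachable.refl _) hx
  rcases hadj p q hpq with hρ | ⟨-, hρ⟩
  · exact hq (SimpleGraph.Reachable.trans hp (SimpleGraph.Adj.reachable (Or.inl ⟨hpq, hρ⟩)))
  · obtain ⟨j, rfl⟩ : q ∈ Set.range line := hline ▸ hρ
    exact hq (hreach 0 j)

theorem isEdgeCut_lineGraft_line (hline : ∀ i, ρ (line i) = line i) (i : Fin m) :
    IsEdgeCut (lineGraft G ρ line) {x | ∃ j ≤ i.castSucc, ρ x = line j}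
      (line i.castSucc) (line i.succ) := by
  have hmem : ∀ k, (∃ j ≤ i.castSucc, ρ (line k) = line j) ↔ k ≤ i.castSucc := by
    intro k
    rw [hline]
    exact ⟨fun ⟨j, hj, hkj⟩ => line.injective hkj ▸ hj, fun hk => ⟨k, hk, rfl⟩⟩
  have hpath : (SimpleGraph.pathGraph (m + 1)).Adj i.castSucc i.succ :=
    SimpleGraph.pathGraph_adj.2 (Or.inl rfl)
  refine ⟨(hmem _).2 le_rfl, fun h => (hmem _).1 h |>.not_gt i.castSucc_lt_succ,
    Or.inr (SimpleGraph.map_adj_apply.2 hpath), ?_⟩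
  rintro x ⟨j, hj, hx⟩ y hy (⟨-, hxy⟩ | hxy)
  · exact absurd ⟨j, hj, hxy.symm.trans hx⟩ hy
  · obtain ⟨k, l, hkl, rfl, rfl⟩ := (SimpleGraph.map_adj _ _ _ _).1 hxy
    have hk : k ≤ i.castSucc := (hmem k).1 ⟨j, hj, hx⟩
    have hl : ¬ l ≤ i.castSucc := fun h => hy ((hmem l).2 h)
    rw [SimpleGraph.pathGraph_adj] at hkl
    rw [Fin.le_def, Fin.val_castSucc] at hk hl
    constructor <;> congr 1 <;> ext <;> simp only [Fin.val_castSucc, Fin.val_succ] <;> omega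

theorem IsEdgeCut.lineGraft (hU : IsEdgeCut G U s t)
    (hadj : ∀ x y, G.Adj x y → ρ x = ρ y ∨ ρ x = x ∧ ρ y = y)
    (hline : ∀ i, ρ (line i) = line i) (hfix : ∀ x ∈ U, ρ x ≠ x) :
    IsEdgeCut (lineGraft G ρ line) U s t where
  left_mem := hU.left_mem
  right_notMem := hU.right_notMem
  adj := Or.inl ⟨hU.adj, (hadj s t hU.adj).resolve_right fun h => hfix s hU.left_mem h.1⟩
  eq_of_adj := by
    rintro x hx y hy (⟨hxy, -⟩ | hxy)
    · exact hU.eq_of_adj x hx y hy hxy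
    · obtain ⟨k, -, -, rfl, -⟩ := (SimpleGraph.map_adj _ _ _ _).1 hxy
      exact absurd (hline k) (hfix _ hx)

end LineGraft

section PruningTree

variable {α : Type*} [Fintype α] [Nonempty α] {D : Set (Pref α)} {ρ : α → α}
  {T : SimpleGraph α} {P : Pref α} {U : Set α} {s t v w : α}

/-- The possible shapes of an edge cut of the tree `T` which realizes the pruning `ρ`: an arc inside
a fibre, oriented away from or towards `U`, or a cut along the line from `v` to `w`. -/
def IsPruningCut (D : Set (Pref α)) (ρ : α → α) (v w : α) (U : Set α) (s t : α) : Prop :=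
  (IsArc D U s t ∧ ∀ x ∈ U, ρ x ≠ x) ∨ (IsArc D Uᶜ t s ∧ ∀ x ∈ Uᶜ, ρ x ≠ x) ∨
    ((∀ x, ρ x ∈ U ↔ x ∈ U) ∧ (v ∈ U ↔ w ∉ U))

theorem IsPruningCut.compl (h : IsPruningCut D ρ v w U s t) : IsPruningCut D ρ v w Uᶜ t s := by
  rcases h with h | h | ⟨hsat, hvw⟩
  · exact Or.inr (Or.inl (by rwa [compl_compl]))
  · exact Or.inl h
  · refine Or.inr (Or.inr ⟨fun x => not_congr (hsat x), ?_⟩)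
    rw [Set.mem_compl_iff, Set.mem_compl_iff, hvw]

/-- A tree in which the fixed points of the pruning `ρ` form the path from `v` to `w`, and the
other alternatives hang from its ends. -/
structure IsPruningTree (D : Set (Pref α)) (ρ : α → α) (v w : α) (T : SimpleGraph α) : Prop where
  isTree : T.IsTree
  isPruningCut : ∀ U s t, IsEdgeCut T U s t → IsPruningCut D ρ v w U s t
  sideSet_left : sideSet T v w = {x | ρ x = v}
  sideSet_right : sideSet T w v = {x | ρ x = w}

theorem IsPruning.exists_isPruningCut_of_ne {m : ℕ} {line : Fin (m + 1) ↪ α} (h : IsPruning D ρ)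
    (hD : (adjGraph D).Connected) (hline : ∀ i, ρ (line i) = line i) (hs : ρ s ≠ s)
    (hst : (adjGraph D).Adj s t) :
    ∃ U, IsEdgeCut (lineGraft (adjGraph D) ρ line) U s t ∧ IsPruningCut D ρ v w U s t := by
  obtain ⟨U, hU | hU, hfix⟩ := h.exists_isArc_of_adj hD hs hst
  · exact ⟨U, hU.lineGraft (fun _ _ => h.eq_or_eq_of_adj) hline hfix, Or.inl ⟨hU, hfix⟩⟩
  · exact ⟨Uᶜ, (hU.lineGraft (fun _ _ => h.eq_or_eq_of_adj) hline hfix).compl,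
      IsPruningCut.compl (Or.inl ⟨hU, hfix⟩)⟩

theorem IsPruning.isPruningCut_line {m : ℕ} {line : Fin (m + 1) ↪ α} (h : IsPruning D ρ)
    (hline : ∀ i, ρ (line i) = line i) (i : Fin m) :
    IsPruningCut D ρ (line 0) (line (Fin.last m)) {x | ∃ j ≤ i.castSucc, ρ x = line j} s t := by
  refine Or.inr (Or.inr ⟨fun x => ?_, ?_⟩)
  · rw [Set.mem_ofPred_eq, Set.mem_ofPred_eq, h.idem]
  · refine iff_of_true ⟨0, Fin.zero_le _, hline 0⟩ fun ⟨j, hj, hlast⟩ => ?_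
    rw [hline, line.apply_eq_iff_eq] at hlast
    exact (hlast ▸ hj).not_gt i.castSucc_lt_last

theorem IsPruning.exists_isPruningCut_of_adj {m : ℕ} {line : Fin (m + 1) ↪ α} (h : IsPruning D ρ)
    (hD : (adjGraph D).Connected) (hline : ∀ i, ρ (line i) = line i)
    (hst : (lineGraft (adjGraph D) ρ line).Adj s t) :
    ∃ U, IsEdgeCut (lineGraft (adjGraph D) ρ line) U s t ∧
      IsPruningCut D ρ (line 0) (line (Fin.last m)) U s t := by
  rcases hst with ⟨hadj, hρ⟩ | hpath
  · by_cases hs : ρ s = s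
    · obtain ⟨U, hU, hcut⟩ := h.exists_isPruningCut_of_ne hD hline
        (fun ht => hadj.ne (hs.symm.trans (hρ.trans ht))) hadj.symm
      exact ⟨Uᶜ, hU.compl, hcut.compl⟩
    · exact h.exists_isPruningCut_of_ne hD hline hs hadj
  · obtain ⟨i, j, hij, rfl, rfl⟩ := (SimpleGraph.map_adj _ _ _ _).1 hpath
    have hsucc : ∀ {i j : Fin (m + 1)}, i.val + 1 = j.val →
        ∃ k : Fin m, k.castSucc = i ∧ k.succ = j := fun {i j} hij =>
      ⟨⟨i, by omega⟩, rfl, Fin.ext hij⟩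
    rcases SimpleGraph.pathGraph_adj.1 hij with hij | hij
    · obtain ⟨k, rfl, rfl⟩ := hsucc hij
      exact ⟨_, isEdgeCut_lineGraft_line hline k, h.isPruningCut_line hline k⟩
    · obtain ⟨k, rfl, rfl⟩ := hsucc hij
      exact ⟨_, (isEdgeCut_lineGraft_line hline k).compl, (h.isPruningCut_line hline k).compl⟩

theorem IsPruning.exists_isPruningTree (h : IsPruning D ρ) (hD : (adjGraph D).Connected)
    (hvw : v ≠ w) (hv : ρ v = v) (hw : ρ w = w) : ∃ T, IsPruningTree D ρ v w T := by
  obtain ⟨m, line, hrange, rfl, rfl⟩ := exists_line (Z := Function.fixedPoints ρ) hv hw hvw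
  have hline : ∀ i, ρ (line i) = line i := fun i =>
    show line i ∈ Function.fixedPoints ρ from hrange ▸ Set.mem_range_self i
  have hT := lineGraft_connected hD (fun _ _ => h.eq_or_eq_of_adj) hrange
  refine ⟨lineGraft (adjGraph D) ρ line, isTree_of_exists_isEdgeCut hT fun s t hst => ?_,
    fun U s t hU => ?_, ?_, ?_⟩
  · exact (h.exists_isPruningCut_of_adj hD hline hst).imp fun _ => And.left
  · obtain ⟨U', hU', hcut⟩ := h.exists_isPruningCut_of_adj hD hline hU.adj
    exact hU.unique hU' hT ▸ hcut
  · have hU := isEdgeCut_lineGraft_line (G := adjGraph D) hline 0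
    have hset : {x | ∃ j ≤ (0 : Fin (m + 1)).castSucc, ρ x = line j} = {x | ρ x = line 0} := by
      ext x
      exact ⟨fun ⟨j, hj, hx⟩ => (Fin.le_zero_iff.1 hj) ▸ hx, fun hx => ⟨0, le_rfl, hx⟩⟩
    rw [hset] at hU
    exact hU.sideSet_eq hT fun hlast => hvw.symm (hw.symm.trans hlast)
  · have hU := (isEdgeCut_lineGraft_line (G := adjGraph D) hline (Fin.last m)).compl
    have hset : {x | ∃ j ≤ (Fin.last m).castSucc, ρ x = line j}ᶜ =
        {x | ρ x = line (Fin.last (m + 1))} := by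
      ext x
      obtain ⟨k, hk⟩ : ρ x ∈ Set.range line := hrange ▸ h.idem x
      simp only [Set.mem_compl_iff, Set.mem_ofPred_eq, ← hk, line.apply_eq_iff_eq,
        exists_eq_right', not_le, Fin.castSucc_lt_iff_succ_le, Fin.succ_last, Fin.last_le_iff]
    rw [hset, Fin.succ_last] at hU
    exact hU.sideSet_eq hT fun hzero => hvw (hv.symm.trans hzero)

theorem IsPruningTree.symm (h : IsPruningTree D ρ v w T) : IsPruningTree D ρ w v T where
  isTree := h.isTree
  isPruningCut U s t hU := (h.isPruningCut U s t hU).imp_right (Or.imp_right fun hcut =>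
    ⟨hcut.1, by rw [← not_iff_not, ← hcut.2, not_not]⟩)
  sideSet_left := h.sideSet_right
  sideSet_right := h.sideSet_left

theorem IsPruningTree.intv_eq (h : IsPruningTree D ρ v w T) (hv : ρ v = v) (hw : ρ w = w)
    (hside : ∀ x, ρ x = x ∨ ρ x = v ∨ ρ x = w) : intv T v w = Function.fixedPoints ρ := by
  have hc := h.isTree.connected
  refine Set.Subset.antisymm (fun x hx => ?_) fun x hx => ?_
  · rcases hside x with hfix | hxv | hxw
    · exact hfix
    · have hside : x ∈ sideSet T v w := h.sideSet_left ▸ hxv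
      exact eq_of_mem_intv_of_mem_sideSet hc hx hside ▸ hv
    · have hside : x ∈ sideSet T w v := h.sideSet_right ▸ hxw
      exact eq_of_mem_intv_of_mem_sideSet hc (intv_comm (T := T) v w ▸ hx) hside ▸ hw
  · refine mem_intv_of_forall_isEdgeCut h.isTree fun U s t hU hxU => ?_
    rcases h.isPruningCut U s t hU with hcut | hcut | hcut
    · exact absurd hx (hcut.2 x hxU)
    · exact Or.inl (by_contra fun hvU => hcut.2 v hvU hv)
    · exact or_iff_not_imp_right.2 hcut.2.2

theorem IsPruningTree.semiSP (h : IsPruningTree D ρ v w T) (hv : ρ v = v) (hP : P ∈ D)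
    (hpeak : ρ (peak P) = v) : SemiSP T v P := by
  refine (semiSP_iff_forall_isEdgeCut h.isTree).2 fun U s t hU hvU hpeakU => ?_
  rcases h.isPruningCut U s t hU with hcut | hcut | hcut
  · exact hcut.1.isBestOf P hP hpeakU
  · exact absurd hv (hcut.2 v hvU)
  · exact absurd (hpeak ▸ (hcut.1 _).2 hpeakU) hvU

theorem IsPruningTree.semiHybridPref (h : IsPruningTree D ρ v w T) (hρ : IsPruning D ρ)
    (hv : ρ v = v) (hw : ρ w = w) (hvw : v ≠ w)
    (hside : ∀ x, ρ x = x ∨ ρ x = v ∨ ρ x = w) (hP : P ∈ D) : SemiHybridPref T v w P := by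
  rw [SemiHybridPref, h.sideSet_left, h.sideSet_right, h.intv_eq hv hw hside]
  have hleft : ρ (peak P) ≠ v ∨ peak P = v → IsBestOf P v {x | ρ x = v} := hρ.isBestOf hv hP
  have hright : ρ (peak P) ≠ w ∨ peak P = w → IsBestOf P w {x | ρ x = w} := hρ.isBestOf hw hP
  refine ⟨fun ⟨hpeak, _⟩ => ?_, fun ⟨hpeak, _⟩ => ?_, fun hpeak => ?_⟩
  · exact ⟨h.semiSP hv hP hpeak, hright (Or.inl fun hpw => hvw (hpeak.symm.trans hpw))⟩
  · exact ⟨h.symm.semiSP hw hP hpeak, hleft (Or.inl fun hpv => hvw (hpv.symm.trans hpeak))⟩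
  · have hne : ∀ u, ρ (peak P) ≠ u ∨ peak P = u := fun u => by
      rw [Function.mem_fixedPoints_iff.1 hpeak]
      exact ne_or_eq _ _
    exact ⟨hleft (hne v), hright (hne w)⟩

theorem IsPruning.exists_semiHybrid (h : IsPruning D ρ) (hD : (adjGraph D).Connected)
    (hdiv : Diversity D) (hρ : (Function.fixedPoints ρ).Nontrivial) :
    ∃ T a b, T.IsTree ∧ DualThresholds T a b ∧ D ⊆ {P | SemiHybridPref T a b P} ∧
      intv T a b = Function.fixedPoints ρ := by
  obtain ⟨v, w, hvw, hv, hw, hside⟩ := h.exists_eq_or_eq_of_diversity hdiv hρ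
  obtain ⟨T, hT⟩ := h.exists_isPruningTree hD hvw hv hw
  have hzone := hT.intv_eq hv hw hside
  refine ⟨T, v, w, hT.isTree, dualThresholds_of_forall_mem hT.isTree hvw fun c hc => ?_,
    fun P hP => hT.semiHybridPref h hv hw hvw hside hP, hzone⟩
  rw [hT.sideSet_left, hT.sideSet_right]
  exact (hside c).resolve_left fun hfix => hc (hzone ▸ hfix)

theorem DualThresholds.exists_isPruning [Nontrivial α] {a b : α} (h : DualThresholds T a b)
    (hT : T.IsTree) (hD : ∀ P ∈ D, SemiHybridPref T a b P) (hG : (adjGraph D).Connected) :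
    ∃ ρ, IsPruning D ρ ∧ Function.fixedPoints ρ = intv T a b := by
  have hc := hT.connected
  have hdisj := Set.disjoint_left.1 (disjoint_sideSet hc h.1)
  have ha := h.hangsFrom_sideSet hT hD hG
  have hb := h.symm.hangsFrom_sideSet hT (fun P hP => (hD P hP).symm) hG
  have hleft := isPruning_id.piecewise ha fun _ => Iff.rfl
  refine ⟨_, hleft.piecewise hb fun x => ?_, ?_⟩
  · by_cases hx : x ∈ sideSet T a b
    · rw [Set.piecewise_eq_of_mem _ _ _ hx]
      exact iff_of_false (hdisj ha.mem) (hdisj hx)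
    · rw [Set.piecewise_eq_of_notMem _ _ _ hx, id]
  · ext x
    rw [mem_fixedPoints_piecewise hb.mem, mem_fixedPoints_piecewise ha.mem]
    constructor
    · rintro (rfl | ⟨hxb, rfl | ⟨hxa, -⟩⟩)
      · exact right_mem_intv _ _
      · exact left_mem_intv _ _
      · exact (h.mem_intv_or_mem_sideSet hT x).resolve_right (not_or_intro hxa hxb)
    · intro hx
      refine or_iff_not_imp_left.2 fun hxb => ⟨fun hside => hxb ?_, ?_⟩
      · exact eq_of_mem_intv_of_mem_sideSet hc (intv_comm (T := T) a b ▸ hx) hside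
      · exact or_iff_not_imp_left.2 fun hxa =>
          ⟨fun hside => hxa (eq_of_mem_intv_of_mem_sideSet hc hx hside), rfl⟩

end PruningTree

/-! ### An anonymous rule on a semi-single-peaked domain -/

section RootedMeet

variable {V : Type*} [Nonempty V] {T : SimpleGraph V} {ι : Type*} {q : ι → V}
  {x d : V}

/-- The vertex farthest from the root `x` among those lying on the paths from `x` to all of the
points `q i`: their meet, when the tree `T` is ordered away from `x`. -/
noncomputable def rootedMeet (T : SimpleGraph V) (x : V) (q : ι → V) : V :=
  Classical.epsilon fun l => (∀ i, l ∈ intv T x (q i)) ∧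
    ∀ d, (∀ i, d ∈ intv T x (q i)) → T.dist x d ≤ T.dist x l

theorem rootedMeet_comp (T : SimpleGraph V) (x : V) (q : ι → V) (σ : Equiv.Perm ι) :
    rootedMeet T x (q ∘ σ) = rootedMeet T x q := by
  have hσ : ∀ d, (∀ i, d ∈ intv T x (q (σ i))) ↔ ∀ i, d ∈ intv T x (q i) := fun d =>
    ⟨fun h i => σ.apply_symm_apply i ▸ h (σ.symm i), fun h i => h (σ i)⟩
  simp only [rootedMeet, Function.comp_apply, hσ]

variable [Finite V]

theorem rootedMeet_spec (T : SimpleGraph V) (x : V) (q : ι → V) :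
    (∀ i, rootedMeet T x q ∈ intv T x (q i)) ∧
      ∀ d, (∀ i, d ∈ intv T x (q i)) → T.dist x d ≤ T.dist x (rootedMeet T x q) :=
  Classical.epsilon_spec (Set.exists_max_image {d | ∀ i, d ∈ intv T x (q i)} (T.dist x)
    (Set.toFinite _) ⟨x, fun _ => left_mem_intv _ _⟩)

theorem rootedMeet_const [Nonempty ι] (hT : T.Connected) (x y : V) :
    rootedMeet T x (fun _ : ι => y) = y := by
  obtain ⟨hmem, hmax⟩ := rootedMeet_spec T x (fun _ : ι => y)
  have hmem := hmem (Classical.arbitrary ι)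
  have hmax := hmax y fun _ => right_mem_intv _ _
  rw [mem_intv] at hmem
  exact hT.dist_eq_zero_iff.1 (by omega)

/-- Were `rootedMeet T x q` cut off from `q i` and `d`, all the points `q j` would lie across the
cut, whose far end would be a common vertex of the paths farther from `x`. -/
theorem rootedMeet_mem_intv (hT : T.IsTree) {i : ι} (hd : ∀ j ≠ i, d ∈ intv T x (q j)) :
    rootedMeet T x q ∈ intv T (q i) d := by
  have hc := hT.connected
  obtain ⟨hmem, hmax⟩ := rootedMeet_spec T x q
  refine mem_intv_of_forall_isEdgeCut hT fun U s t hU hl => ?_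
  by_contra! hout
  have hx : x ∈ U := (hU.mem_or_mem_of_mem_intv hc (hmem i) hl).resolve_right hout.1
  have hq : ∀ j, q j ∉ U := fun j hj => by
    have hji : j ≠ i := fun hji => hout.1 (hji ▸ hj)
    exact (hU.compl.mem_or_mem_of_mem_intv hc (hd j hji) hout.2).elim (· hx) (· hj)
  have hle := hmax t fun j => hU.right_mem_intv hc hx (hq j)
  have hli := mem_intv.1 (hmem i)
  have hxt := hU.dist_eq hc hx hU.right_notMem
  rw [SimpleGraph.dist_self] at hxt
  rw [hU.dist_eq hc hx (hq i), hU.dist_eq hc hl (hq i)] at hli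
  omega

end RootedMeet

theorem exists_anonymous_of_semiSP {α : Type*} [Fintype α] [Nonempty α] {D : Set (Pref α)}
    {T : SimpleGraph α} {x : α} (hT : T.IsTree) (hD : ∀ P ∈ D, SemiSP T x P) {n : ℕ} [NeZero n] :
    ∃ f : (Fin n → Pref α) → α,
      IsRule D f ∧ TopsOnly D f ∧ StrategyProof D f ∧ Anonymous D f := by
  refine ⟨fun P => rootedMeet T x (peak ∘ P), fun P _ a ha => ?_, fun P P' _ _ h => ?_,
    fun P hP i Q _ => ?_, fun P _ σ => rootedMeet_comp T x (peak ∘ P) σ⟩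
  · exact (congrArg _ (funext ha)).trans (rootedMeet_const hT.connected x a)
  · exact congrArg _ (funext h)
  · rw [← weaklyPrefers_iff]
    obtain ⟨hmem, -⟩ := rootedMeet_spec T x (peak ∘ P)
    refine (hD _ (hP i)).weaklyPrefers_of_mem_intv hT (intv_comm (T := T) _ _ ▸ hmem i)
      (rootedMeet_mem_intv hT (q := peak ∘ P) fun j hj => ?_)
    have := (rootedMeet_spec T x (peak ∘ Function.update P i Q)).1 j
    rwa [Function.comp_apply, Function.update_of_ne hj] at this

/-! ### From two voters to many -/

section ManyVoters

variable {α : Type*} [Fintype α] {D : Set (Pref α)} {Z : Set α} {n m : ℕ}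
  {f : (Fin n → Pref α) → α} {P : Fin n → Pref α} {Q R : Pref α} {c : Fin n → Option (Fin m)}
  {S : Finset (Fin n)} {i : Fin n}

theorem InDom.piecewise {P' : Fin n → Pref α} (hP : InDom D P) (hP' : InDom D P') :
    InDom D (S.piecewise P P') :=
  fun j => S.piecewise_cases P P' (· ∈ D) (hP j) (hP' j)

theorem inDom_pair (hQ : Q ∈ D) (hR : R ∈ D) : InDom D ![Q, R] := by
  rw [InDom, Fin.forall_fin_two]
  exact ⟨hQ, hR⟩

theorem StrategyProof.weaklyPrefers_piecewise (hf : StrategyProof D f) (hP : InDom D P)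
    (hQ : Q ∈ D) (hS : ∀ j ∈ S, P j = R) :
    _root_.weaklyPrefers R (f P) (f (S.piecewise (fun _ => Q) P)) := by
  induction S using Finset.induction_on with
  | empty => rw [Finset.piecewise_empty]
  | insert i S hi ih =>
    have hdev := hf.weaklyPrefers (InDom.piecewise (S := S) (fun _ => hQ) hP) i hQ
    rw [Finset.piecewise_eq_of_notMem _ _ _ hi, hS i (Finset.mem_insert_self _ _)] at hdev
    rw [Finset.piecewise_insert]
    exact (ih fun j hj => hS j (Finset.mem_insert_of_mem hj)).trans hdev

/-- The profile in which the block `c ⁻¹' {some k}` of voters votes unanimously for `R k` and the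
remaining voters hold the fixed preference `Q`. -/
def mergeProfile (c : Fin n → Option (Fin m)) (Q : Pref α) (R : Fin m → Pref α) :
    Fin n → Pref α :=
  fun j => (c j).elim Q R

theorem inDom_mergeProfile {R : Fin m → Pref α} (hR : InDom D R) (hQ : Q ∈ D) :
    InDom D (mergeProfile c Q R) := by
  intro j
  rw [mergeProfile]
  cases c j with
  | none => exact hQ
  | some k => exact hR k

theorem mergeProfile_update (R : Fin m → Pref α) (k : Fin m) (R' : Pref α) :
    mergeProfile c Q (Function.update R k R') =
      (Finset.univ.filter (c · = some k)).piecewise (fun _ => R') (mergeProfile c Q R) := by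
  funext j
  by_cases hj : c j = some k
  · simp [mergeProfile, Finset.piecewise, hj]
  · rw [Finset.piecewise_eq_of_notMem _ _ _ (by simpa using hj), mergeProfile, mergeProfile]
    cases hcj : c j with
    | none => rfl
    | some l =>
      rw [hcj, Option.some_inj] at hj
      simp only [Option.elim_some, Function.update_of_ne hj]

theorem StrategyProof.comp_mergeProfile (hf : StrategyProof D f) (hQ : Q ∈ D) :
    StrategyProof D fun R : Fin m → Pref α => f (mergeProfile c Q R) := by
  intro R hR k R' hR'
  rw [← weaklyPrefers_iff]
  simp only [mergeProfile_update]
  refine hf.weaklyPrefers_piecewise (inDom_mergeProfile hR hQ) hR' fun j hj => ?_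
  rw [mergeProfile, (Finset.mem_filter.1 hj).2, Option.elim_some]

variable [Nonempty α]

theorem TopsOnly.comp_mergeProfile (hf : TopsOnly D f) (hQ : Q ∈ D) :
    TopsOnly D fun R : Fin m → Pref α => f (mergeProfile c Q R) := by
  intro R R' hR hR' hpeak
  refine hf _ _ (inDom_mergeProfile hR hQ) (inDom_mergeProfile hR' hQ) fun j => ?_
  rw [mergeProfile, mergeProfile]
  cases c j with
  | none => rfl
  | some k => exact hpeak k

/-- Unanimity of `f` at the profiles whose common peak lies in `Z`. -/
def UnanimousOn (D : Set (Pref α)) (Z : Set α) (f : (Fin n → Pref α) → α) : Prop :=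
  ∀ P, InDom D P → ∀ z ∈ Z, (∀ j, peak (P j) = z) → f P = z

/-- Voter `i` obtains every peak in `Z`, wherever the peaks of the others lie. This is stronger
than `DictatorOn D f Z`, which constrains the profiles with all peaks in `Z` only. -/
def Dictates (D : Set (Pref α)) (Z : Set α) (f : (Fin n → Pref α) → α) (i : Fin n) : Prop :=
  ∀ P, InDom D P → peak (P i) ∈ Z → f P = peak (P i)

theorem Dictates.dictatorOn (h : Dictates D Z f i) : DictatorOn D f Z :=
  ⟨i, fun P hP hpeaks => h P hP (hpeaks i)⟩

/-- The coalition `S` obtains each of its common peaks in `Z` when the other voters agree with one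
another. -/
def Winning (D : Set (Pref α)) (Z : Set α) (f : (Fin n → Pref α) → α) (S : Finset (Fin n)) :
    Prop :=
  ∀ P ∈ D, ∀ Q ∈ D, peak P ∈ Z → f (S.piecewise (fun _ => P) fun _ => Q) = peak P

/-- Every two-voter function obtained from `f` by merging voters into two blocks has a dictator on
`Z` as soon as it is unanimous on `Z`. -/
def HasDictatorialMergers (D : Set (Pref α)) (Z : Set α) (f : (Fin n → Pref α) → α) : Prop :=
  ∀ (c : Fin n → Option (Fin 2)), ∀ Q ∈ D, UnanimousOn D Z (fun R => f (mergeProfile c Q R)) →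
    ∃ k, Dictates D Z (fun R => f (mergeProfile c Q R)) k

theorem winning_univ (hu : UnanimousOn D Z f) : Winning D Z f Finset.univ := by
  intro P hP Q _ hpeak
  rw [Finset.piecewise_univ]
  exact hu _ (fun _ => hP) _ hpeak fun _ => rfl

theorem not_winning_empty (hr : MinimallyRich D) (hZ : Z.Nontrivial) (hu : UnanimousOn D Z f) :
    ¬ Winning D Z f ∅ := by
  intro h
  obtain ⟨x, hx, y, hy, hxy⟩ := hZ
  obtain ⟨P, hP, rfl⟩ := hr x
  obtain ⟨Q, hQ, rfl⟩ := hr y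
  have hval := h P hP Q hQ hx
  rw [Finset.piecewise_empty] at hval
  exact hxy (hval.symm.trans (hu _ (fun _ => hQ) _ hy fun _ => rfl))

theorem winning_or_winning_compl (hr : MinimallyRich D) (hu : UnanimousOn D Z f)
    (h2 : HasDictatorialMergers D Z f) (S : Finset (Fin n)) :
    Winning D Z f S ∨ Winning D Z f Sᶜ := by
  obtain ⟨Q₀, hQ₀, -⟩ := hr (Classical.arbitrary α)
  have hmerge : ∀ R : Fin 2 → Pref α,
      mergeProfile (fun j => if j ∈ S then some 0 else some 1) Q₀ R =
        S.piecewise (fun _ => R 0) fun _ => R 1 := by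
    intro R
    funext j
    by_cases hj : j ∈ S <;> simp [mergeProfile, hj]
  obtain ⟨k, hk⟩ := h2 (fun j => if j ∈ S then some 0 else some 1) Q₀ hQ₀ fun R hR z hz hpeak => by
    simp only [hmerge]
    exact hu _ (.piecewise (fun _ => hR 0) fun _ => hR 1) z hz fun _ =>
      S.piecewise_cases (fun _ => R 0) (fun _ => R 1) (fun P => peak P = z) (hpeak 0) (hpeak 1)
  simp only [Dictates, hmerge] at hk
  obtain rfl | rfl : k = 0 ∨ k = 1 := by omega
  · exact Or.inl fun P hP Q hQ => hk ![P, Q] (inDom_pair hP hQ)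
  · refine Or.inr fun P hP Q hQ => ?_
    rw [Finset.piecewise_compl]
    exact hk ![Q, P] (inDom_pair hQ hP)

theorem Dictates.winning {c : Fin n → Option (Fin 2)} {k : Fin 2}
    (hk : Dictates D Z (fun R => f (mergeProfile c Q R)) k)
    (hr : MinimallyRich D) (hZ : Z.Nontrivial) (hu : UnanimousOn D Z f)
    (h2 : HasDictatorialMergers D Z f) (hQ : Q ∈ D) (hpeak : peak Q ∈ Z) :
    Winning D Z f (Finset.univ.filter (c · = some k)) := by
  refine (winning_or_winning_compl hr hu h2 _).resolve_right fun hwin => ?_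
  obtain ⟨z, hz, hne⟩ := hZ.exists_ne (peak Q)
  obtain ⟨R, hR, rfl⟩ := hr z
  have hval := hk (Function.update (fun _ => Q) k R) (fun l => by
    by_cases hl : l = k
    · rwa [hl, Function.update_self]
    · rwa [Function.update_of_ne hl]) (by rwa [Function.update_self])
  have hconst : mergeProfile c Q (fun _ => Q) = fun _ => Q := by
    funext j
    rw [mergeProfile]
    cases c j <;> rfl
  simp only [mergeProfile_update, hconst, Function.update_self] at hval
  have hval' := hwin Q hQ R hR hpeak
  rw [Finset.piecewise_compl] at hval'
  exact hne (hval.symm.trans hval')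

theorem Winning.singleton_or_erase (hwin : Winning D Z f S) (hf : StrategyProof D f)
    (hr : MinimallyRich D) (hZ : Z.Nontrivial) (hu : UnanimousOn D Z f)
    (h2 : HasDictatorialMergers D Z f) (hi : i ∈ S) :
    Winning D Z f {i} ∨ Winning D Z f (S.erase i) := by
  obtain ⟨z, hz⟩ := hZ.nonempty
  obtain ⟨Q, hQ, rfl⟩ := hr z
  let c : Fin n → Option (Fin 2) := fun j =>
    if j = i then some 0 else if j ∈ S then some 1 else none
  have hc0 : ∀ j, c j = some 0 ↔ j ∈ ({i} : Finset (Fin n)) := by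
    intro j
    by_cases hji : j = i <;> by_cases hj : j ∈ S <;> simp [c, hji, hj]
  have hc1 : ∀ j, c j = some 1 ↔ j ∈ S.erase i := by
    intro j
    by_cases hji : j = i <;> by_cases hj : j ∈ S <;> simp [c, hji, hj]
  have hunan : UnanimousOn D Z fun R => f (mergeProfile c Q R) := by
    intro R hR z hz hpeak
    have hdev := hf.weaklyPrefers_piecewise (inDom_mergeProfile (c := c) hR hQ) (hR 0)
      (S := S.erase i) (R := R 1) fun j hj => by rw [mergeProfile, (hc1 j).2 hj, Option.elim_some]
    have hmerge : (S.erase i).piecewise (fun _ => R 0) (mergeProfile c Q R) =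
        S.piecewise (fun _ => R 0) fun _ => Q := by
      funext j
      by_cases hji : j = i <;> by_cases hj : j ∈ S <;>
        simp [Finset.piecewise, mergeProfile, c, hji, hj, hi]
    rw [hmerge, hwin (R 0) (hR 0) Q hQ (hpeak 0 ▸ hz), hpeak 0, ← hpeak 1] at hdev
    exact hdev.eq_peak.trans (hpeak 1)
  obtain ⟨k, hk⟩ := h2 c Q hQ hunan
  have hblock := hk.winning hr hZ hu h2 hQ hz
  obtain rfl | rfl : k = 0 ∨ k = 1 := by omega
  · left; simpa only [hc0, Finset.filter_univ_mem] using hblock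
  · right; simpa only [hc1, Finset.filter_univ_mem] using hblock

theorem Winning.exists_singleton (hwin : Winning D Z f S) (hf : StrategyProof D f)
    (hr : MinimallyRich D) (hZ : Z.Nontrivial) (hu : UnanimousOn D Z f)
    (h2 : HasDictatorialMergers D Z f) : ∃ i, Winning D Z f {i} := by
  induction S using Finset.strongInduction with
  | H S ih =>
    obtain ⟨i, hi⟩ : S.Nonempty :=
      Finset.nonempty_iff_ne_empty.2 fun h => not_winning_empty hr hZ hu (h ▸ hwin)
    rcases hwin.singleton_or_erase hf hr hZ hu h2 hi with h | h
    · exact ⟨i, h⟩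
    · exact ih _ (Finset.erase_ssubset hi) h

theorem Winning.dictates (hwin : Winning D Z f {i}) (hf : StrategyProof D f)
    (hr : MinimallyRich D) : Dictates D Z f i := by
  intro P hP hpeak
  obtain ⟨Q, hQ, hQpeak⟩ := hr (f P)
  -- A voter whose peak is already chosen cannot be brought to it from another preference.
  have hkeep : ∀ S : Finset (Fin n), f (S.piecewise (fun _ => Q) P) = f P := by
    intro S
    induction S using Finset.induction_on with
    | empty => rw [Finset.piecewise_empty]
    | insert j S hj ih =>
      have hdev := hf.weaklyPrefers (InDom.piecewise (S := insert j S) (fun _ => hQ) hP) j (hP j)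
      rw [Finset.piecewise_insert, Function.update_self, Function.update_idem,
        ← Finset.piecewise_eq_of_notMem S (fun _ => Q) P hj, Function.update_eq_self, ih,
        ← hQpeak] at hdev
      rw [Finset.piecewise_insert, hdev.eq_peak, hQpeak]
  have hval := hwin (P i) (hP i) Q hQ hpeak
  rw [← hval, ← hkeep {i}ᶜ, Finset.piecewise_compl]
  congr 1
  funext j
  by_cases hj : j = i <;> simp [hj]

theorem exists_dictates (hf : StrategyProof D f) (hr : MinimallyRich D) (hZ : Z.Nontrivial)
    (hu : UnanimousOn D Z f) (h2 : HasDictatorialMergers D Z f) : ∃ i, Dictates D Z f i := by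
  obtain ⟨i, hi⟩ := (winning_univ hu).exists_singleton hf hr hZ hu h2
  exact ⟨i, hi.dictates hf hr⟩

end ManyVoters

/-! ### Two-voter rules -/

section TwoVoters

open Relation (TransGen ReflTransGen)

theorem wellFounded_of_forall_not_transGen {β : Type*} [Finite β] {r : β → β → Prop}
    (h : ∀ x, ¬ TransGen r x x) : WellFounded r :=
  have : Std.Irrefl (TransGen r) := ⟨h⟩
  Subrelation.wf TransGen.single (Finite.wellFounded_of_trans_of_irrefl (TransGen r))

variable {α : Type*} [Fintype α] {D : Set (Pref α)} {Z : Set α}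
  {f : Pref α → Pref α → α} {P Q : Pref α} {a b c u v x y z : α}

section

variable [Nonempty α]

/-- Strategy-proofness of a two-voter function together with unanimity on the alternatives of `Z`.
The function is curried, so that the roles of the voters are exchanged by `flip`. -/
structure IsTwoVoterRule (D : Set (Pref α)) (Z : Set α) (f : Pref α → Pref α → α) : Prop where
  left : ∀ P ∈ D, ∀ Q ∈ D, ∀ R ∈ D, weaklyPrefers P (f P Q) (f R Q)
  right : ∀ P ∈ D, ∀ Q ∈ D, ∀ R ∈ D, weaklyPrefers Q (f P Q) (f P R)
  unanimous : ∀ P ∈ D, ∀ Q ∈ D, peak P = peak Q → peak P ∈ Z → f P Q = peak P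

theorem IsTwoVoterRule.flip (h : IsTwoVoterRule D Z f) : IsTwoVoterRule D Z (flip f) where
  left P hP Q hQ R hR := h.right Q hQ P hP R hR
  right P hP Q hQ R hR := h.left Q hQ P hP R hR
  unanimous P hP Q hQ hpeak hZ := (h.unanimous Q hQ P hP hpeak.symm (hpeak ▸ hZ)).trans hpeak.symm

theorem IsTwoVoterRule.congr {f' : Pref α → Pref α → α} (h : IsTwoVoterRule D Z f)
    (heq : ∀ P ∈ D, ∀ Q ∈ D, f P Q = f' P Q) : IsTwoVoterRule D Z f' where
  left P hP Q hQ R hR := heq P hP Q hQ ▸ heq R hR Q hQ ▸ h.left P hP Q hQ R hR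
  right P hP Q hQ R hR := heq P hP Q hQ ▸ heq P hP R hR ▸ h.right P hP Q hQ R hR
  unanimous P hP Q hQ hpeak hZ := heq P hP Q hQ ▸ h.unanimous P hP Q hQ hpeak hZ

/-- The value of `f` is `c` whenever the peaks of the voters are `a` and `b`. -/
def HasValue (D : Set (Pref α)) (f : Pref α → Pref α → α) (a b c : α) : Prop :=
  ∀ P ∈ D, ∀ Q ∈ D, peak P = a → peak Q = b → f P Q = c

theorem HasValue.flip (h : HasValue D f a b c) : HasValue D (flip f) b a c :=
  fun P hP Q hQ hPb hQa => h Q hQ P hP hQa hPb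

theorem HasValue.unique {c' : α} (h : HasValue D f a b c) (h' : HasValue D f a b c')
    (hr : MinimallyRich D) : c = c' := by
  obtain ⟨P, hP, hPa⟩ := hr a
  obtain ⟨Q, hQ, hQb⟩ := hr b
  rw [← h P hP Q hQ hPa hQb, h' P hP Q hQ hPa hQb]

/-- Each of `a` and `b` is ranked second by some preference of `D` with the other one as peak. -/
def MutualSeconds (D : Set (Pref α)) (a b : α) : Prop :=
  b ∈ secondsSet D a ∧ a ∈ secondsSet D b

/-- A pair `u`, `v` of mutual seconds at which neither voter is decisive: `v` is chosen against `u`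
whichever of the two voters defends it. -/
structure IsMixedPair (D : Set (Pref α)) (Z : Set α) (f : Pref α → Pref α → α) (u v : α) :
    Prop where
  left_mem : u ∈ Z
  right_mem : v ∈ Z
  mutualSeconds : MutualSeconds D u v
  hasValue : HasValue D f u v v
  hasValue_swap : HasValue D f v u v

/-- A mixed pair of adjacent alternatives, viewed as an edge from `u` to `v`. -/
def IsMixedEdge (D : Set (Pref α)) (Z : Set α) (f : Pref α → Pref α → α) (u v : α) : Prop :=
  (adjGraph D).Adj u v ∧ IsMixedPair D Z f u v

theorem IsMixedPair.flip (h : IsMixedPair D Z f u v) : IsMixedPair D Z (flip f) u v :=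
  ⟨h.left_mem, h.right_mem, h.mutualSeconds, h.hasValue_swap.flip, h.hasValue.flip⟩

theorem IsMixedEdge.flip (h : IsMixedEdge D Z f u v) : IsMixedEdge D Z (flip f) u v :=
  ⟨h.1, h.2.flip⟩

end

variable [Nontrivial α]

theorem MutualSeconds.ne (h : MutualSeconds D a b) : a ≠ b := by
  obtain ⟨⟨P, -, rfl, rfl⟩, -⟩ := h
  exact peak_ne_second P

theorem mutualSeconds_of_adj (h : (adjGraph D).Adj a b) : MutualSeconds D a b :=
  ⟨exists_peak_second_of_adj h, exists_peak_second_of_adj h.symm⟩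

namespace IsTwoVoterRule

theorem hasValue_left_of_apply_eq (h : IsTwoVoterRule D Z f) (hP : P ∈ D) (hQ : Q ∈ D)
    (hPQ : second P = peak Q) (hZ : peak Q ∈ Z) (hval : f P Q = peak P) :
    HasValue D f (peak P) (peak Q) (peak P) := by
  intro P' hP' Q' hQ' hPeak hQeak
  have hPQ' : f P Q' = peak P := by
    have hle := h.left P hP Q' hQ' Q hQ
    rw [h.unanimous Q hQ Q' hQ' hQeak.symm hZ, ← hPQ] at hle
    refine hle.eq_peak_or_eq_second.resolve_right fun hsecond => ?_
    have hle' := h.right P hP Q hQ Q' hQ'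
    rw [hsecond, hval, hPQ] at hle'
    exact peak_ne_second P (hle'.eq_peak.trans hPQ.symm)
  have hle := h.left P' hP' Q' hQ' P hP
  rw [hPQ', ← hPeak] at hle
  exact hle.eq_peak.trans hPeak

theorem hasValue_left_or_right (h : IsTwoVoterRule D Z f) (ha : a ∈ Z) (hb : b ∈ Z)
    (hab : MutualSeconds D a b) : HasValue D f a b a ∨ HasValue D f a b b := by
  obtain ⟨⟨P, hP, rfl, hPb⟩, Q, hQ, rfl, hQa⟩ := hab
  have hle := h.left P hP Q hQ Q hQ
  rw [h.unanimous Q hQ Q hQ rfl hb, ← hPb] at hle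
  refine hle.eq_peak_or_eq_second.imp (h.hasValue_left_of_apply_eq hP hQ hPb hb) fun hval => ?_
  exact (h.flip.hasValue_left_of_apply_eq hQ hP hQa ha (hval.trans hPb)).flip

theorem exists_eq_or_eq_of_adj (h : IsTwoVoterRule D Z f) (hyz : (adjGraph D).Adj y z) :
    ∃ Q ∈ D, ∃ Q' ∈ D, peak Q = y ∧ peak Q' = z ∧
      ∀ P ∈ D, f P Q = f P Q' ∨ f P Q = y ∧ f P Q' = z := by
  obtain ⟨Q, hQ, Q', hQ', rfl, rfl, hpeak, -, hrk⟩ := adjGraph_adj.1 hyz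
  exact ⟨Q, hQ, Q', hQ', rfl, hpeak, fun P hP =>
    eq_or_eq_peak_and_eq_second hrk (h.right P hP Q hQ Q' hQ') (h.right P hP Q' hQ' Q hQ)⟩

theorem hasValue_forward (h : IsTwoVoterRule D Z f) (hr : MinimallyRich D)
    (hyx : x ∈ secondsSet D y) (hyz : (adjGraph D).Adj y z) (hxz : x ≠ z) (hy : y ∈ Z)
    (hz : z ∈ Z) (hval : HasValue D f x y x) : HasValue D f y z y := by
  obtain ⟨Q, hQ, Q', hQ', hQy, hQz, hmove⟩ := h.exists_eq_or_eq_of_adj hyz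
  obtain ⟨P, hP, rfl⟩ := hr x
  obtain ⟨P', hP', rfl, hsecond⟩ := hyx
  have hPQ := hval P hP Q hQ rfl hQy
  have hPQ' : f P Q' = peak P := by
    rcases hmove P hP with heq | ⟨heq, -⟩
    · rw [← heq, hPQ]
    · exact absurd (heq.symm.trans (hPQ.trans hsecond.symm)) (peak_ne_second P')
  refine (h.hasValue_left_or_right hy hz (mutualSeconds_of_adj hyz)).resolve_right fun hright => ?_
  have hle := h.left P' hP' Q' hQ' P hP
  rw [hright P' hP' Q' hQ' rfl hQz, hPQ', ← hsecond] at hle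
  rcases hle.eq_peak_or_eq_second with heq | heq
  · exact hyz.ne heq.symm
  · exact hxz (hsecond.symm.trans heq.symm)

theorem hasValue_dominates {d e j : α} (h : IsTwoVoterRule D Z f) (hr : MinimallyRich D)
    (hde : MutualSeconds D d e) (hed : HasValue D f e d e) (hdj : HasValue D f d j d) :
    HasValue D f e j e := by
  obtain ⟨P, hP, rfl, hsecond⟩ := hde.2
  obtain ⟨R, hR, hRd⟩ := hr d
  intro P' hP' Q hQ hP'e hQj
  have hPQ : f P Q = peak P := by
    have hle := h.left P hP Q hQ R hR
    rw [hdj R hR Q hQ hRd hQj, ← hsecond] at hle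
    refine hle.eq_peak_or_eq_second.resolve_right fun heq => ?_
    have hle' := h.right P hP R hR Q hQ
    rw [hed P hP R hR rfl hRd, heq, hsecond, ← hRd] at hle'
    exact hde.ne (hRd.symm.trans hle'.eq_peak.symm)
  have hle := h.left P' hP' Q hQ P hP
  rw [hPQ, ← hP'e] at hle
  exact hle.eq_peak.trans hP'e

end IsTwoVoterRule

theorem IsMixedPair.isMixedEdge_of_adj (huv : IsMixedPair D Z f u v) (h : IsTwoVoterRule D Z f)
    (hr : MinimallyRich D) (hc : c ∈ Z) (hcu : (adjGraph D).Adj c u) (hne : c ≠ v) :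
    IsMixedEdge D Z f c u := by
  have hfwd : ∀ {f}, IsTwoVoterRule D Z f → HasValue D f v u v → HasValue D f u c u :=
    fun h => h.hasValue_forward hr huv.mutualSeconds.1 hcu.symm hne.symm huv.left_mem hc
  exact ⟨hcu, hc, huv.left_mem, mutualSeconds_of_adj hcu, (hfwd h.flip huv.hasValue.flip).flip,
    hfwd h huv.hasValue_swap⟩

theorem IsMixedEdge.isMixedPair_of_mutualSeconds (huv : IsMixedEdge D Z f u v)
    (h : IsTwoVoterRule D Z f) (hr : MinimallyRich D) (hc : c ∈ Z) (hcu : MutualSeconds D c u)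
    (hne : c ≠ v) : IsMixedPair D Z f c u := by
  have hback : ∀ {f}, IsTwoVoterRule D Z f → HasValue D f u v v → HasValue D f c u u :=
    fun h hval => (h.hasValue_left_or_right hc huv.2.left_mem hcu).resolve_left fun hcuc =>
      huv.1.ne ((h.hasValue_forward hr hcu.2 huv.1 hne huv.2.left_mem huv.2.right_mem hcuc).unique
        hval hr)
  exact ⟨hc, huv.2.left_mem, hcu, hback h huv.2.hasValue,
    (hback h.flip huv.2.hasValue_swap.flip).flip⟩

theorem IsTwoVoterRule.not_transGen_isMixedPair (h : IsTwoVoterRule D Z f)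
    (hr : MinimallyRich D) (x : α) : ¬ TransGen (IsMixedPair D Z f) x x := by
  intro hx
  obtain ⟨y, hxy, hyx⟩ := TransGen.head'_iff.1 hx
  have hval : ∀ z, ReflTransGen (IsMixedPair D Z f) y z → HasValue D f z y z := by
    intro z hz
    induction hz with
    | refl =>
      intro P hP Q hQ hPy hQy
      rw [h.unanimous P hP Q hQ (hPy.trans hQy.symm) (hPy ▸ hxy.right_mem), hPy]
    | tail _ hzw ih => exact h.hasValue_dominates hr hzw.mutualSeconds hzw.hasValue_swap ih
  exact hxy.mutualSeconds.ne ((hval x hyx).unique hxy.hasValue hr)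

theorem IsTwoVoterRule.not_transGen_isMixedEdge (h : IsTwoVoterRule D Z f)
    (hr : MinimallyRich D) (x : α) : ¬ TransGen (IsMixedEdge D Z f) x x :=
  fun hx => h.not_transGen_isMixedPair hr x (hx.lift id fun _ _ => And.right)

theorem IsTwoVoterRule.hasValue_left_of_hasValue_left {ρ : α → α}
    (h : IsTwoVoterRule D (Function.fixedPoints ρ) f) (hD : (adjGraph D).Connected)
    (hρ : IsPruning D ρ) (hno : ∀ u v, ¬ IsMixedEdge D (Function.fixedPoints ρ) f u v)
    (hx : ρ x = x) (hy : ρ y = y) (hxy : (adjGraph D).Adj x y) (hval : HasValue D f x y x) :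
    ∀ u v, ρ u = u → ρ v = v → (adjGraph D).Adj u v → HasValue D f u v u := by
  have hr := minimallyRich_of_connected hD
  have hstep : ∀ x y, ρ x = x → ρ y = y → (adjGraph D).Adj x y → HasValue D f x y x →
      ∀ z, ρ z = z → (adjGraph D).Adj y z → HasValue D f y z y := by
    intro x y hx hy hxy hval z hz hyz
    by_cases hxz : x = z
    · subst hxz
      refine (h.hasValue_left_or_right hy hx (mutualSeconds_of_adj hyz)).resolve_right
        fun hright => ?_
      exact hno y x ⟨hyz, hy, hx, mutualSeconds_of_adj hyz, hright, hval⟩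
    · exact h.hasValue_forward hr (mutualSeconds_of_adj hxy).2 hyz hxz hy hz hval
  have hall : ∀ p, ∀ z, ρ z = z → (adjGraph D).Adj (ρ p) z → HasValue D f (ρ p) z (ρ p) := by
    intro p
    induction (SimpleGraph.reachable_iff_reflTransGen y p).1 (hD.preconnected y p) with
    | refl => rw [hy]; exact hstep x y hx hy hxy hval
    | @tail p q _ hpq ih =>
      rcases hρ.eq_or_eq_of_adj hpq with heq | ⟨hp, hq⟩
      · rwa [← heq]
      · rw [hp] at ih
        rw [hq]
        exact hstep p q hp hq hpq (ih q hq hpq)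
  exact fun u v hu hv huv => hu ▸ hall u v hv (hu.symm ▸ huv)

theorem IsTwoVoterRule.forall_hasValue_left_or_right {ρ : α → α}
    (h : IsTwoVoterRule D (Function.fixedPoints ρ) f) (hD : (adjGraph D).Connected)
    (hρ : IsPruning D ρ) (hno : ∀ u v, ¬ IsMixedEdge D (Function.fixedPoints ρ) f u v) :
    (∀ u v, ρ u = u → ρ v = v → (adjGraph D).Adj u v → HasValue D f u v u) ∨
      ∀ u v, ρ u = u → ρ v = v → (adjGraph D).Adj u v → HasValue D (_root_.flip f) u v u := by
  by_cases! hedge : ∃ x y, ρ x = x ∧ ρ y = y ∧ (adjGraph D).Adj x y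
  · obtain ⟨x, y, hx, hy, hxy⟩ := hedge
    refine (h.hasValue_left_or_right hx hy (mutualSeconds_of_adj hxy)).imp
      (h.hasValue_left_of_hasValue_left hD hρ hno hx hy hxy) fun hval => ?_
    exact h.flip.hasValue_left_of_hasValue_left hD hρ (fun u v huv => hno u v huv.flip) hy hx
      hxy.symm hval.flip
  · exact Or.inl fun u v hu hv huv => absurd huv (hedge u v hu hv)

end TwoVoters

/-! ### Two-voter rules depending on the peaks -/

section TopsOnlyRules

open Function (fixedPoints)
open Relation (TransGen ReflTransGen)

variable {α : Type*} [Fintype α] {D : Set (Pref α)} {Z : Set α} {ρ : α → α}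
  {f : Pref α → Pref α → α} {F : α → α → α} {P : Pref α} {a b c p q u v w x y z : α}

section

variable [Nonempty α]

/-- The two-voter function which applies `F` to the peaks of the voters. -/
noncomputable def ofTops (F : α → α → α) : Pref α → Pref α → α :=
  fun P Q => F (peak P) (peak Q)

theorem hasValue_ofTops (hr : MinimallyRich D) :
    HasValue D (ofTops F) a b c ↔ F a b = c := by
  refine ⟨fun h => ?_, fun h P _ Q _ hPa hQb => by rw [ofTops, hPa, hQb, h]⟩
  obtain ⟨P, hP, rfl⟩ := hr a
  obtain ⟨Q, hQ, rfl⟩ := hr b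
  exact h P hP Q hQ rfl rfl

theorem IsTwoVoterRule.flip_ofTops (h : IsTwoVoterRule D Z (ofTops F)) :
    IsTwoVoterRule D Z (ofTops fun x y => F y x) :=
  h.flip

theorem IsMixedEdge.flip_ofTops (h : IsMixedEdge D Z (ofTops F) u v) :
    IsMixedEdge D Z (ofTops fun x y => F y x) u v :=
  h.flip

theorem IsTwoVoterRule.apply_weaklyPrefers (h : IsTwoVoterRule D Z (ofTops F))
    (hr : MinimallyRich D) (hP : P ∈ D) (q r : α) :
    weaklyPrefers P (F (peak P) q) (F r q) := by
  obtain ⟨Q, hQ, rfl⟩ := hr q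
  obtain ⟨R, hR, rfl⟩ := hr r
  exact h.left P hP Q hQ R hR

theorem IsTwoVoterRule.apply_self (h : IsTwoVoterRule D Z (ofTops F)) (hr : MinimallyRich D)
    (hz : z ∈ Z) : F z z = z := by
  obtain ⟨P, hP, rfl⟩ := hr z
  exact h.unanimous P hP P hP rfl hz

/-- The alternatives which `ρ` sends to a predecessor of `u` along mixed edges. If a mixed edge
leaves `u`, this is the branch that it cuts off. -/
def mixedAncestors (D : Set (Pref α)) (ρ : α → α) (f : Pref α → Pref α → α) (u : α) : Set α :=
  {x | ReflTransGen (IsMixedEdge D (fixedPoints ρ) f) (ρ x) u}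

theorem mixedAncestors_flip_ofTops (D : Set (Pref α)) (ρ : α → α) (F : α → α → α) (u : α) :
    mixedAncestors D ρ (ofTops fun x y => F y x) u = mixedAncestors D ρ (ofTops F) u := by
  have hflip : IsMixedEdge D (fixedPoints ρ) (ofTops fun x y => F y x) =
      IsMixedEdge D (fixedPoints ρ) (ofTops F) := by
    funext x y
    exact propext ⟨IsMixedEdge.flip_ofTops, IsMixedEdge.flip_ofTops⟩
  rw [mixedAncestors, hflip, mixedAncestors]

theorem IsPruning.mem_mixedAncestors_iff (hρ : IsPruning D ρ) :
    ρ x ∈ mixedAncestors D ρ f u ↔ x ∈ mixedAncestors D ρ f u := by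
  rw [mixedAncestors, Set.mem_ofPred_eq, Set.mem_ofPred_eq, hρ.idem]

end

variable [Nontrivial α]

theorem IsTwoVoterRule.apply_eq_or_of_adj (h : IsTwoVoterRule D Z (ofTops F))
    (hr : MinimallyRich D) (x : α) (hyz : (adjGraph D).Adj y z) :
    F x y = F x z ∨ F x y = y ∧ F x z = z := by
  obtain ⟨P, hP, rfl⟩ := hr x
  obtain ⟨Q, -, Q', -, rfl, rfl, hmove⟩ := h.exists_eq_or_eq_of_adj hyz
  exact hmove P hP

theorem IsTwoVoterRule.isEdgeCut_mixedAncestors (h : IsTwoVoterRule D (fixedPoints ρ) f)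
    (hr : MinimallyRich D) (hρ : IsPruning D ρ) (huv : IsMixedEdge D (fixedPoints ρ) f u v) :
    IsEdgeCut (adjGraph D) (mixedAncestors D ρ f u) u v where
  left_mem := by
    rw [← hρ.mem_mixedAncestors_iff, mixedAncestors, Set.mem_ofPred_eq, hρ.idem,
      huv.2.left_mem.eq]
  right_notMem hv := by
    rw [mixedAncestors, Set.mem_ofPred_eq, huv.2.right_mem.eq] at hv
    exact h.not_transGen_isMixedEdge hr u (.head' huv hv)
  adj := huv.1
  eq_of_adj x hx y hy hxy := by
    rcases hρ.eq_or_eq_of_adj hxy with heq | ⟨hfx, hfy⟩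
    · exact absurd (show ReflTransGen _ (ρ y) u from heq ▸ hx) hy
    have hback : ∀ o, IsMixedEdge D (fixedPoints ρ) f x o → y = o := by
      intro o hxo
      by_contra hne
      refine hy ?_
      rw [mixedAncestors, Set.mem_ofPred_eq, hfy]
      exact .head (hxo.2.isMixedEdge_of_adj h hr hfy hxy.symm hne) (hfx ▸ hx)
    rw [mixedAncestors, Set.mem_ofPred_eq, hfx] at hx
    rcases hx.cases_head with rfl | ⟨o, hxo, hou⟩
    · exact ⟨rfl, hback v huv⟩
    · obtain rfl := hback o hxo
      exact absurd (show ReflTransGen _ (ρ y) u by rwa [hfy]) hy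

section MixedEdge

variable (h : IsTwoVoterRule D (fixedPoints ρ) (ofTops F)) (hD : (adjGraph D).Connected)
  (hρ : IsPruning D ρ) (huv : IsMixedEdge D (fixedPoints ρ) (ofTops F) u v)
include h hD hρ huv

theorem IsTwoVoterRule.apply_eq_of_mem_mixedAncestors
    (hp : p ∈ mixedAncestors D ρ (ofTops F) u) : F v p = v := by
  have hr := minimallyRich_of_connected hD
  have hU := h.isEdgeCut_mixedAncestors hr hρ huv
  refine hU.induction hD (motive := fun p => F v p = v)
    ((hasValue_ofTops hr).1 huv.2.hasValue_swap) (fun p _ q hq hpq hval => ?_) p hp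
  rcases h.apply_eq_or_of_adj hr v hpq with heq | ⟨-, heq⟩
  · rw [heq, hval]
  · exact absurd (heq.symm.trans hval ▸ hq) hU.right_notMem

theorem IsTwoVoterRule.apply_notMem_mixedAncestors (hw : w ∉ mixedAncestors D ρ (ofTops F) u)
    (hp : p ∈ mixedAncestors D ρ (ofTops F) u) : F w p ∉ mixedAncestors D ρ (ofTops F) u := by
  have hr := minimallyRich_of_connected hD
  have hU := h.isEdgeCut_mixedAncestors hr hρ huv
  refine hU.compl.induction hD (motive := fun w => F w p ∉ _) ?_
    (fun w hw w' _ hww' hval => ?_) w hw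
  · rw [h.apply_eq_of_mem_mixedAncestors hD hρ huv hp]
    exact hU.right_notMem
  · rcases h.flip_ofTops.apply_eq_or_of_adj hr p hww' with heq | ⟨heq, -⟩
    · exact heq.symm ▸ hval
    · exact heq.symm ▸ hw

theorem IsTwoVoterRule.apply_eq_apply_of_mem_mixedAncestors
    (hw : w ∉ mixedAncestors D ρ (ofTops F) u) (hp : p ∈ mixedAncestors D ρ (ofTops F) u) :
    F w p = F w v := by
  have hr := minimallyRich_of_connected hD
  have hU := h.isEdgeCut_mixedAncestors hr hρ huv
  have hmove : ∀ p ∈ mixedAncestors D ρ (ofTops F) u, ∀ q, (adjGraph D).Adj p q →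
      F w p = F w q := fun p hp q hpq =>
    (h.apply_eq_or_of_adj hr w hpq).resolve_right fun heq =>
      h.apply_notMem_mixedAncestors hD hρ huv hw hp (heq.1.symm ▸ hp)
  exact hU.induction hD (motive := fun p => F w p = F w v) (hmove u hU.left_mem v hU.adj)
    (fun p hp q _ hpq hval => (hmove p hp q hpq).trans hval) p hp

theorem IsTwoVoterRule.isArc_mixedAncestors :
    IsArc D (mixedAncestors D ρ (ofTops F) u) u v where
  toIsEdgeCut := h.isEdgeCut_mixedAncestors (minimallyRich_of_connected hD) hρ huv
  isBestOf P hP hpeak := by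
    have hr := minimallyRich_of_connected hD
    have hfixed : ∀ w, ρ w = w → w ∉ mixedAncestors D ρ (ofTops F) u → weaklyPrefers P v w := by
      intro w hfix hw
      have hvp := h.apply_eq_of_mem_mixedAncestors hD hρ huv hpeak
      have hwp : F (peak P) w = F v w :=
        h.flip_ofTops.apply_eq_apply_of_mem_mixedAncestors hD hρ huv.flip_ofTops
          ((mixedAncestors_flip_ofTops D ρ F u).symm ▸ hw)
          ((mixedAncestors_flip_ofTops D ρ F u).symm ▸ hpeak)
      have hv : weaklyPrefers P (F v (peak P)) (F v w) :=
        h.flip_ofTops.apply_weaklyPrefers hr hP v w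
      have hw := h.apply_weaklyPrefers hr hP w w
      rw [hvp] at hv
      rw [hwp, h.apply_self hr hfix] at hw
      exact hv.trans hw
    refine isBestOf_iff.2 ⟨(h.isEdgeCut_mixedAncestors hr hρ huv).right_notMem, fun w hw => ?_⟩
    have hρw := mt hρ.mem_mixedAncestors_iff.1 hw
    refine (hfixed (ρ w) (hρ.idem w) hρw).trans (hρ.weaklyPrefers hP fun heq => hρw ?_)
    exact heq ▸ hρ.mem_mixedAncestors_iff.2 hpeak

theorem IsTwoVoterRule.exists_isArc_of_mem_mixedAncestors
    (hx : x ∈ mixedAncestors D ρ (ofTops F) u) :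
    ∃ U t, t ∈ insert v (mixedAncestors D ρ (ofTops F) u) ∧ IsArc D U x t ∧
      U ⊆ mixedAncestors D ρ (ofTops F) u ∧ v ∉ U := by
  have hv := (h.isEdgeCut_mixedAncestors (minimallyRich_of_connected hD) hρ huv).right_notMem
  by_cases hfx : ρ x = x
  · have hsub : mixedAncestors D ρ (ofTops F) x ⊆ mixedAncestors D ρ (ofTops F) u :=
      fun y hy => ReflTransGen.trans hy (hfx ▸ hx)
    obtain ⟨o, hxo, ho⟩ : ∃ o, IsMixedEdge D (fixedPoints ρ) (ofTops F) x o ∧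
        o ∈ insert v (mixedAncestors D ρ (ofTops F) u) := by
      rw [mixedAncestors, Set.mem_ofPred_eq, hfx] at hx
      rcases hx.cases_head with rfl | ⟨o, hxo, hou⟩
      · exact ⟨v, huv, Set.mem_insert _ _⟩
      · exact ⟨o, hxo, Or.inr (by rwa [mixedAncestors, Set.mem_ofPred_eq, hxo.2.right_mem.eq])⟩
    exact ⟨_, o, ho, h.isArc_mixedAncestors hD hρ hxo, hsub, fun hvx => hv (hsub hvx)⟩
  · obtain ⟨U, t, ht, hU, hUS, -⟩ := (hρ x).exists_isArc x rfl (Ne.symm hfx)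
    have hsub : {y | ρ y = ρ x} ⊆ mixedAncestors D ρ (ofTops F) u := fun y hy =>
      hρ.mem_mixedAncestors_iff.1 ((hy : ρ y = ρ x) ▸ hρ.mem_mixedAncestors_iff.2 hx)
    exact ⟨U, t, Or.inr (hsub ht), hU, hUS.trans hsub, fun hvU => hv (hsub (hUS hvU))⟩

end MixedEdge

theorem IsTwoVoterRule.apply_eq_left_of_forall_adj
    (h : IsTwoVoterRule D (fixedPoints ρ) (ofTops F)) (hD : (adjGraph D).Connected)
    (hρ : IsPruning D ρ) (hz : ρ z = z)
    (hkeep : ∀ y, ρ y = y → (adjGraph D).Adj z y → F z y = z) (hp : ρ p ≠ z) : F z p = z := by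
  have hr := minimallyRich_of_connected hD
  induction (SimpleGraph.reachable_iff_reflTransGen p z).1 (hD.preconnected p z)
    using ReflTransGen.head_induction_on with
  | refl => exact absurd hz hp
  | @head p q hpq _ ih =>
    have hmove : ρ q ≠ z → F z p = z := fun hq => by
      rcases h.apply_eq_or_of_adj hr z hpq with heq | ⟨-, heq⟩
      · rw [heq, ih hq]
      · exact absurd (heq.symm.trans (ih hq) ▸ hz) hq
    rcases hρ.eq_or_eq_of_adj hpq with heq | ⟨hfp, hfq⟩
    · exact hmove (heq ▸ hp)
    · by_cases hqz : q = z
      · exact hkeep p hfp (hqz ▸ hpq.symm)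
      · exact hmove (hfq.symm ▸ hqz)

theorem IsTwoVoterRule.hangsFrom_mixedAncestors
    (h : IsTwoVoterRule D (fixedPoints ρ) (ofTops F)) (hD : (adjGraph D).Connected)
    (hρ : IsPruning D ρ) (huv : IsMixedEdge D (fixedPoints ρ) (ofTops F) u v)
    (hkeep : ∀ y, ρ y = y → (adjGraph D).Adj v y → F v y = v) :
    HangsFrom D (insert v (mixedAncestors D ρ (ofTops F) u)) v where
  mem := Set.mem_insert _ _
  exists_isArc x hx hne := by
    obtain ⟨U, t, ht, hU, hsub, hv⟩ :=
      h.exists_isArc_of_mem_mixedAncestors hD hρ huv (hx.resolve_left hne)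
    exact ⟨U, t, ht, hU, hsub.trans (Set.subset_insert _ _), hv⟩
  isBestOf P hP hpeak := by
    have hr := minimallyRich_of_connected hD
    have hpv : peak P ≠ v := fun heq => hpeak (Or.inl heq)
    have hpU : peak P ∉ mixedAncestors D ρ (ofTops F) u := fun hU => hpeak (Or.inr hU)
    have hv := (h.isEdgeCut_mixedAncestors hr hρ huv).right_notMem
    refine isBestOf_iff.2 ⟨Set.mem_insert _ _, ?_⟩
    rintro y (rfl | hy)
    · exact le_rfl
    have hρy := hρ.mem_mixedAncestors_iff.2 hy
    by_cases hpρ : ρ (peak P) = v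
    · refine ((hρ.hangsFrom huv.2.right_mem).prefers_of_notMem hD hP hpρ hpv
        fun hyv => hv ?_).weaklyPrefers
      exact (hyv : ρ y = v) ▸ hρy
    have hval : F (ρ y) (peak P) = v := by
      rw [← h.apply_eq_left_of_forall_adj hD hρ huv.2.right_mem hkeep hpρ]
      exact h.flip_ofTops.apply_eq_apply_of_mem_mixedAncestors hD hρ huv.flip_ofTops
        ((mixedAncestors_flip_ofTops D ρ F u).symm ▸ hpU)
        ((mixedAncestors_flip_ofTops D ρ F u).symm ▸ hρy)
    have hle := h.flip_ofTops.apply_weaklyPrefers hr hP (ρ y) (ρ y)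
    rw [hval, h.apply_self hr (hρ.idem y)] at hle
    exact hle.trans (hρ.weaklyPrefers hP fun heq =>
      hpU (hρ.mem_mixedAncestors_iff.1 (heq ▸ hρy)))

/-- A pruning onto at least two alternatives which cannot be continued, neither with at least two
fixed points remaining nor down to a leaf of the set of its fixed points. -/
structure IsReducedPruning (D : Set (Pref α)) (ρ : α → α) : Prop where
  isPruning : IsPruning D ρ
  nontrivial : (fixedPoints ρ).Nontrivial
  not_ssubset : ∀ ρ', IsPruning D ρ' → (fixedPoints ρ').Nontrivial →
    ¬ fixedPoints ρ' ⊂ fixedPoints ρ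
  not_isLeafOn : ∀ v, HangsFrom D Set.univ v → ¬ IsLeafOn (adjGraph D) (fixedPoints ρ) v

theorem IsTwoVoterRule.not_isMixedEdge_of_forall_adj
    (h : IsTwoVoterRule D (fixedPoints ρ) (ofTops F)) (hD : (adjGraph D).Connected)
    (hρ : IsReducedPruning D ρ)
    (hkeep : ∀ y, ρ y = y → (adjGraph D).Adj v y → F v y = v) :
    ¬ IsMixedEdge D (fixedPoints ρ) (ofTops F) u v := by
  intro huv
  have hU := h.isEdgeCut_mixedAncestors (minimallyRich_of_connected hD) hρ.isPruning huv
  have hfv : ρ v = v := huv.2.right_mem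
  obtain ⟨S, hS, hmem⟩ : ∃ S, HangsFrom D S v ∧
      ∀ x, x ∈ S ↔ x ∈ mixedAncestors D ρ (ofTops F) u ∨ ρ x = v := by
    refine ⟨_, (h.hangsFrom_mixedAncestors hD hρ.isPruning huv hkeep).union
      (hρ.isPruning.hangsFrom hfv), fun x => ⟨?_, Or.imp_left Or.inr⟩⟩
    rintro ((rfl | hx) | hx)
    exacts [Or.inr hfv, Or.inl hx, Or.inr hx]
  have hsat : ∀ x, ρ x ∈ S ↔ x ∈ S := fun x => by
    rw [hmem, hmem, hρ.isPruning.mem_mixedAncestors_iff, hρ.isPruning.idem]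
  have hfix : ∀ x, x ∈ fixedPoints (S.piecewise (fun _ => v) ρ) ↔ x = v ∨ x ∉ S ∧ ρ x = x :=
    fun x => mem_fixedPoints_piecewise hS.mem
  have huniv : S = Set.univ := by
    by_contra hne
    obtain ⟨x, hx⟩ := (Set.ne_univ_iff_exists_notMem S).1 hne
    refine hρ.not_ssubset _ (hρ.isPruning.piecewise hS hsat) ⟨v, (hfix v).2 (Or.inl rfl), ρ x,
      (hfix _).2 (Or.inr ⟨mt (hsat x).1 hx, hρ.isPruning.idem x⟩), ?_⟩
      (Set.ssubset_iff_of_subset ?_ |>.2 ⟨u, huv.2.left_mem, ?_⟩)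
    · exact fun hvx => hx ((hsat x).1 (hvx ▸ hS.mem))
    · rintro y hy
      exact ((hfix y).1 hy).elim (fun hyv => hyv ▸ hfv) And.right
    · exact fun hu => ((hfix u).1 hu).elim huv.1.ne fun hu => hu.1 ((hmem u).2 (.inl hU.left_mem))
  refine hρ.not_isLeafOn v (huniv ▸ hS) ⟨hfv, u, ⟨huv.2.left_mem, huv.1.symm⟩, fun y hy => ?_⟩
  have hyU : y ∈ mixedAncestors D ρ (ofTops F) u :=
    ((hmem y).1 (huniv ▸ trivial)).resolve_right fun hyv => hy.2.ne ((hy.1.symm.trans hyv).symm)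
  exact (hU.eq_of_adj y hyU v hU.right_notMem hy.2.symm).1

theorem IsTwoVoterRule.apply_eq_left (h : IsTwoVoterRule D (fixedPoints ρ) (ofTops F))
    (hD : (adjGraph D).Connected) (hρ : IsPruning D ρ) (hnt : (fixedPoints ρ).Nontrivial)
    (hkeep : ∀ x y, ρ x = x → ρ y = y → (adjGraph D).Adj x y → F x y = x) (hz : ρ z = z)
    (p : α) : F z p = z := by
  have hr := minimallyRich_of_connected hD
  by_cases hp : ρ p = z
  · obtain ⟨y, hy, hzy⟩ := hρ.exists_adj hD hnt hz
    have hyp : F y p = y := h.apply_eq_left_of_forall_adj hD hρ hy (fun x => hkeep y x hy)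
      fun hpy => hzy.ne (hp.symm.trans hpy)
    simp only [← hasValue_ofTops (D := D) hr] at hkeep hyp ⊢
    exact h.hasValue_dominates hr (mutualSeconds_of_adj hzy.symm) (hkeep z y hz hy hzy) hyp
  · exact h.apply_eq_left_of_forall_adj hD hρ hz (fun x => hkeep z x hz) hp

theorem IsTwoVoterRule.forall_not_isMixedEdge
    (h : IsTwoVoterRule D (fixedPoints ρ) (ofTops F)) (hD : (adjGraph D).Connected)
    (hρ : IsReducedPruning D ρ) (u v : α) :
    ¬ IsMixedEdge D (fixedPoints ρ) (ofTops F) u v := by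
  have hr := minimallyRich_of_connected hD
  intro huv
  obtain ⟨u, ⟨v, huv⟩, hmin⟩ := (wellFounded_of_forall_not_transGen
    (r := Function.swap (IsMixedEdge D (fixedPoints ρ) (ofTops F))) fun x hx =>
      h.not_transGen_isMixedEdge hr x (Relation.transGen_swap.1 hx)).has_min
    {u | ∃ v, IsMixedEdge D (fixedPoints ρ) (ofTops F) u v} ⟨u, v, huv⟩
  have hfv : ρ v = v := huv.2.right_mem
  have hlr : ∀ y, ρ y = y → (adjGraph D).Adj v y → F v y = v ∨ F v y = y := fun y hy hvy =>
    (h.hasValue_left_or_right hfv hy (mutualSeconds_of_adj hvy)).imp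
      (hasValue_ofTops hr).1 (hasValue_ofTops hr).1
  have hrl : ∀ y, ρ y = y → (adjGraph D).Adj v y → F y v = v ∨ F y v = y := fun y hy hvy =>
    (h.hasValue_left_or_right hy hfv (mutualSeconds_of_adj hvy.symm)).symm.imp
      (hasValue_ofTops hr).1 (hasValue_ofTops hr).1
  by_cases! hleft : ∀ y, ρ y = y → (adjGraph D).Adj v y → F v y = v
  · exact h.not_isMixedEdge_of_forall_adj hD hρ hleft huv
  obtain ⟨y, hy, hvy, hne⟩ := hleft
  have hyv := (hlr y hy hvy).resolve_left hne
  refine h.flip_ofTops.not_isMixedEdge_of_forall_adj hD hρ (fun x hx hvx => ?_) huv.flip_ofTops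
  refine (hrl x hx hvx).resolve_right fun hxv => ?_
  by_cases hxy : x = y
  · subst hxy
    exact hmin v ⟨x, hvy, hfv, hx, mutualSeconds_of_adj hvy, (hasValue_ofTops hr).2 hyv,
      (hasValue_ofTops hr).2 hxv⟩ huv
  · exact hne ((hasValue_ofTops hr).1 (h.hasValue_forward hr (mutualSeconds_of_adj hvx).1 hvy hxy
      hfv hy ((hasValue_ofTops hr).2 hxv)))

theorem IsTwoVoterRule.exists_dictator (h : IsTwoVoterRule D (fixedPoints ρ) (ofTops F))
    (hD : (adjGraph D).Connected) (hρ : IsReducedPruning D ρ) :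
    (∀ z, ρ z = z → ∀ p, F z p = z) ∨ ∀ z, ρ z = z → ∀ p, F p z = z := by
  have hr := minimallyRich_of_connected hD
  refine (h.forall_hasValue_left_or_right hD hρ.isPruning
    (h.forall_not_isMixedEdge hD hρ)).imp (fun hkeep z hz p => ?_) fun hkeep z hz p => ?_
  · exact h.apply_eq_left hD hρ.isPruning hρ.nontrivial
      (fun x y hx hy hxy => (hasValue_ofTops hr).1 (hkeep x y hx hy hxy)) hz p
  · exact h.flip_ofTops.apply_eq_left hD hρ.isPruning hρ.nontrivial
      (fun x y hx hy hxy =>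
        (hasValue_ofTops (F := fun x y => F y x) hr).1 (hkeep x y hx hy hxy)) hz p

end TopsOnlyRules

/-! ### Domains without unique seconds -/

section UniqueSeconds

open Relation (TransGen ReflTransGen)

variable {α : Type*} [Fintype α] [Nontrivial α] {D : Set (Pref α)}
  {f : Pref α → Pref α → α} {u v w x y z : α}

theorem IsMixedEdge.reflTransGen_of_dist_lt (hwz : IsMixedEdge D Set.univ f w z)
    (h : IsTwoVoterRule D Set.univ f) (hD : (adjGraph D).Connected)
    (hlt : (adjGraph D).dist w x < (adjGraph D).dist z x) :
    ReflTransGen (IsMixedPair D Set.univ f) x w := by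
  induction hd : (adjGraph D).dist w x using Nat.strong_induction_on generalizing w z with
  | _ n ih =>
    by_cases hwx : w = x
    · rw [hwx]
    obtain ⟨c, hwc, hcx⟩ := exists_adj_dist_lt hD hwx
    have hne : c ≠ z := fun hcz => by rw [hcz] at hcx; omega
    have hcw := hwz.2.isMixedEdge_of_adj h (minimallyRich_of_connected hD) trivial hwc.symm hne
    exact (ih _ (hd ▸ hcx) hcw hcx rfl).tail hcw.2

theorem IsTwoVoterRule.adj_of_isMixedPair (h : IsTwoVoterRule D Set.univ f)
    (hD : (adjGraph D).Connected) (hzx : IsMixedPair D Set.univ f z x) :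
    (adjGraph D).Adj z x := by
  have hr := minimallyRich_of_connected hD
  by_contra hnadj
  obtain ⟨w, hzw, hwx⟩ := exists_adj_dist_lt hD hzx.mutualSeconds.ne
  have hwz := hzx.isMixedEdge_of_adj h hr trivial hzw.symm fun heq => hnadj (heq ▸ hzw)
  exact h.not_transGen_isMixedPair hr x
    (.tail (.tail' (hwz.reflTransGen_of_dist_lt h hD hwx) hwz.2) hzx)

theorem exists_ne_mem_secondsSet (hD : (adjGraph D).Connected) (huniq : ¬ UniqueSeconds D)
    (x : α) : ∃ u ∈ secondsSet D x, ∃ v ∈ secondsSet D x, u ≠ v := by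
  obtain ⟨P, hP, hpeak⟩ := minimallyRich_of_connected hD x
  by_contra! hall
  exact huniq ⟨x, second P, Set.eq_singleton_iff_unique_mem.2
    ⟨⟨P, hP, hpeak, rfl⟩, fun v hv => hall v hv _ ⟨P, hP, hpeak, rfl⟩⟩⟩

theorem IsTwoVoterRule.not_isMixedEdge_of_not_uniqueSeconds (h : IsTwoVoterRule D Set.univ f)
    (hD : (adjGraph D).Connected) (hleaf : LeafSymmetry D) (huniq : ¬ UniqueSeconds D) (u v : α) :
    ¬ IsMixedEdge D Set.univ f u v := by
  have hr := minimallyRich_of_connected hD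
  intro huv
  obtain ⟨x, ⟨y, hxy⟩, hmin⟩ :=
    (wellFounded_of_forall_not_transGen (h.not_transGen_isMixedEdge hr)).has_min
      {u | ∃ v, IsMixedEdge D Set.univ f u v} ⟨u, v, huv⟩
  have hunique : ∃! y, (adjGraph D).Adj x y := by
    refine ⟨y, hxy.1, fun c hxc => by_contra fun hne => ?_⟩
    have hcx := hxy.2.isMixedEdge_of_adj h hr trivial hxc.symm hne
    exact hmin c ⟨x, hcx⟩ hcx
  obtain ⟨z, hxz, hnadj, hzx⟩ := hleaf x hunique (exists_ne_mem_secondsSet hD huniq x)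
  have hmixed := hxy.isMixedPair_of_mutualSeconds h hr trivial ⟨hzx, hxz⟩
    fun hzy => hnadj (hzy ▸ hxy.1)
  exact hnadj (h.adj_of_isMixedPair hD hmixed).symm

theorem IsTwoVoterRule.hasValue_left (h : IsTwoVoterRule D Set.univ f)
    (hD : (adjGraph D).Connected)
    (hleft : ∀ u v, (adjGraph D).Adj u v → HasValue D f u v u) (x y : α) :
    HasValue D f x y x := by
  induction (SimpleGraph.reachable_iff_reflTransGen y x).1 (hD.preconnected y x) with
  | refl => exact fun P hP Q hQ hPy hQy =>
      (h.unanimous P hP Q hQ (hPy.trans hQy.symm) trivial).trans hPy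
  | @tail p q _ hpq ih =>
    exact h.hasValue_dominates (minimallyRich_of_connected hD) (mutualSeconds_of_adj hpq)
      (hleft q p hpq.symm) ih

end UniqueSeconds

section Pairs

variable {α : Type*} [Fintype α] [Nonempty α] {D : Set (Pref α)} {Z : Set α}
  {g : (Fin 2 → Pref α) → α}

theorem StrategyProof.isTwoVoterRule (hg : StrategyProof D g) (hu : UnanimousOn D Z g) :
    IsTwoVoterRule D Z fun P Q => g ![P, Q] where
  left P hP Q hQ R hR := by
    have hupdate : Function.update ![P, Q] 0 R = ![R, Q] := Fin.update_cons_zero ..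
    exact hupdate ▸ hg.weaklyPrefers (inDom_pair hP hQ) 0 hR
  right P hP Q hQ R hR := by
    have hupdate : Function.update ![P, Q] 1 R = ![P, R] := by
      funext i
      fin_cases i <;> rfl
    exact hupdate ▸ hg.weaklyPrefers (inDom_pair hP hQ) 1 hR
  unanimous P hP Q hQ hpeak hZ :=
    hu _ (inDom_pair hP hQ) _ hZ (Fin.forall_fin_two.2 ⟨rfl, hpeak.symm⟩)

theorem exists_dictates_of_hasValue
    (h : (∀ x ∈ Z, ∀ y, HasValue D (fun P Q => g ![P, Q]) x y x) ∨
      ∀ x ∈ Z, ∀ y, HasValue D (fun P Q => g ![Q, P]) x y x) : ∃ i, Dictates D Z g i := by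
  have heta : ∀ P : Fin 2 → Pref α, ![P 0, P 1] = P := FinVec.etaExpand_eq
  rcases h with h | h
  · exact ⟨0, fun P hP hZ => heta P ▸ h _ hZ _ (P 0) (hP 0) (P 1) (hP 1) rfl rfl⟩
  · exact ⟨1, fun P hP hZ => heta P ▸ h _ hZ _ (P 1) (hP 1) (P 0) (hP 0) rfl rfl⟩

end Pairs

theorem dictatorialDomain_of_not_uniqueSeconds {α : Type*} [Fintype α] [Nontrivial α]
    {D : Set (Pref α)} (hD : PathConnectedDom D) (hleaf : LeafSymmetry D)
    (huniq : ¬ UniqueSeconds D) : DictatorialDomain D := by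
  intro n _ f hf hsp
  have hmerge : HasDictatorialMergers D Set.univ f := by
    intro c Q hQ hu
    have hg := (hsp.comp_mergeProfile hQ).isTwoVoterRule hu
    have hno := hg.not_isMixedEdge_of_not_uniqueSeconds hD hleaf huniq
    have hfix : Function.fixedPoints (id : α → α) = Set.univ := Function.fixedPoints_id
    have hkeep :=
      IsTwoVoterRule.forall_hasValue_left_or_right (hfix ▸ hg) hD isPruning_id (hfix ▸ hno)
    exact exists_dictates_of_hasValue
      (hkeep.imp (fun hleft x _ => hg.hasValue_left hD (fun u v => hleft u v rfl rfl) x)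
        fun hright x _ => hg.flip.hasValue_left hD (fun u v => hright u v rfl rfl) x)
  obtain ⟨i, hi⟩ := exists_dictates hsp (minimallyRich_of_connected hD) Set.nontrivial_univ
    (fun P hP z _ => hf P hP z) hmerge
  exact hi.dictatorOn

/-! ### Semi-hybrid domains -/

section SemiHybridDomains

theorem TopsOnly.exists_eq_ofTops {α : Type*} [Fintype α] [Nonempty α] {D : Set (Pref α)}
    {g : (Fin 2 → Pref α) → α} (hg : TopsOnly D g) (hr : MinimallyRich D) :
    ∃ F : α → α → α, ∀ P ∈ D, ∀ Q ∈ D, g ![P, Q] = ofTops F P Q := by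
  choose R hR hpeak using hr
  exact ⟨fun x y => g ![R x, R y], fun P hP Q hQ =>
    hg _ _ (inDom_pair hP hQ) (inDom_pair (hR _) (hR _))
      (Fin.forall_fin_two.2 ⟨(hpeak _).symm, (hpeak _).symm⟩)⟩

variable {α : Type*} [Fintype α] [Nontrivial α] {D : Set (Pref α)}
  {T : SimpleGraph α} {ρ : α → α} {a b : α} {n : ℕ} {f : (Fin n → Pref α) → α}

theorem SemiHybridDomainOn.exists_isReducedPruning (h : SemiHybridDomainOn D T a b)
    (hdiv : Diversity D) :
    ∃ ρ, IsReducedPruning D ρ ∧ Function.fixedPoints ρ = intv T a b := by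
  obtain ⟨hT, hab, hsub, hD, hmin, hleaf⟩ := h
  obtain ⟨ρ, hρ, hfix⟩ := hab.exists_isPruning hT hsub hD
  refine ⟨ρ, ⟨hρ, ?_, fun ρ' hρ' hnt hlt => ?_, fun v hv hv' => ?_⟩, hfix⟩
  · rw [hfix]
    exact ⟨a, left_mem_intv a b, b, right_mem_intv a b, hab.1⟩
  · obtain ⟨T', a', b', hT', hab', hsub', hfix'⟩ := hρ'.exists_semiHybrid hD hdiv hnt
    exact hmin ⟨T', a', b', hT', hab', hsub', by rwa [hfix', ← hfix]⟩
  · obtain ⟨P, hP, hPv⟩ := hleaf (hv.isTree_of_univ hD) v (hfix ▸ hv')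
    exact hPv (hv.semiSP_of_univ hD hP)

theorem exists_dictates_pair {g : (Fin 2 → Pref α) → α} (hD : (adjGraph D).Connected)
    (hρ : IsReducedPruning D ρ) (hg : TopsOnly D g) (hsp : StrategyProof D g)
    (hu : UnanimousOn D (Function.fixedPoints ρ) g) :
    ∃ i, Dictates D (Function.fixedPoints ρ) g i := by
  have hr := minimallyRich_of_connected hD
  obtain ⟨F, hF⟩ := hg.exists_eq_ofTops hr
  apply exists_dictates_of_hasValue
  rcases ((hsp.isTwoVoterRule hu).congr hF).exists_dictator hD hρ with hleft | hright
  · exact Or.inl fun x hx y P hP Q hQ hPx hQy =>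
      (hF P hP Q hQ).trans (by rw [ofTops, hPx, hQy, hleft x hx])
  · exact Or.inr fun x hx y P hP Q hQ hPx hQy =>
      (hF Q hQ P hP).trans (by rw [ofTops, hPx, hQy, hright x hx])

theorem SemiHybridDomainOn.exists_dictates (h : SemiHybridDomainOn D T a b) (hdiv : Diversity D)
    (hf : IsRule D f) (htops : TopsOnly D f) (hsp : StrategyProof D f) :
    ∃ i, Dictates D (intv T a b) f i := by
  obtain ⟨ρ, hρ, hfix⟩ := h.exists_isReducedPruning hdiv
  have hD : (adjGraph D).Connected := h.2.2.2.1
  rw [← hfix]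
  exact _root_.exists_dictates hsp (minimallyRich_of_connected hD) hρ.nontrivial
    (fun P hP z _ => hf P hP z) fun c Q hQ =>
      exists_dictates_pair hD hρ (htops.comp_mergeProfile hQ) (hsp.comp_mergeProfile hQ)

theorem semiHybridDomain_of_forall_exists_not_semiSP (hD : PathConnectedDom D)
    (hdiv : Diversity D) (hno : ∀ x, (adjGraph D).IsTree → ∃ P ∈ D, ¬ SemiSP (adjGraph D) x P) :
    SemiHybridDomain D := by
  let zones : Set (Set α) := {Z | ∃ T a b, T.IsTree ∧ DualThresholds T a b ∧
    D ⊆ {P | SemiHybridPref T a b P} ∧ intv T a b = Z}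
  have hne : zones.Nonempty := by
    obtain ⟨T, a, b, h⟩ := isPruning_id.exists_semiHybrid hD hdiv
      (Function.fixedPoints_id.symm ▸ Set.nontrivial_univ)
    exact ⟨_, T, a, b, h⟩
  obtain ⟨Z, ⟨T, a, b, hT, hab, hsub, rfl⟩, hmin⟩ := zones.toFinite.exists_minimal hne
  refine ⟨T, a, b, hT, hab, hsub, hD, ?_, fun hG x _ => hno x hG⟩
  rintro ⟨T', a', b', hT', hab', hsub', hlt⟩
  exact hlt.not_subset (hmin ⟨T', a', b', hT', hab', hsub', rfl⟩ hlt.subset)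

end SemiHybridDomains

theorem Dictates.not_anonymous {α : Type*} [Fintype α] [Nonempty α] {D : Set (Pref α)} {Z : Set α}
    {n : ℕ} {f : (Fin n → Pref α) → α} {i : Fin n} (h : Dictates D Z f i) (hr : MinimallyRich D)
    (hZ : Z.Nontrivial) (hn : 2 ≤ n) : ¬ Anonymous D f := by
  intro hanon
  obtain ⟨a, ha, b, hb, hab⟩ := hZ
  obtain ⟨P, hP, rfl⟩ := hr a
  obtain ⟨Q, hQ, rfl⟩ := hr b
  have : Nontrivial (Fin n) := Fin.nontrivial_iff_two_le.2 hn
  obtain ⟨j, hj⟩ := exists_ne i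
  obtain ⟨R, hRi, hRj⟩ : ∃ R : Fin n → Pref α, R i = P ∧ ∀ k ≠ i, R k = Q :=
    ⟨Function.update (fun _ => Q) i P, Function.update_self .., fun k hk =>
      Function.update_of_ne hk ..⟩
  have hR : InDom D R := fun k => by
    by_cases hk : k = i
    · rwa [hk, hRi]
    · rwa [hRj k hk]
  have hswap : (R ∘ Equiv.swap i j) i = Q := by
    rw [Function.comp_apply, Equiv.swap_apply_left, hRj j hj]
  have hfR := h R hR (hRi.symm ▸ ha)
  have hfswap := h (R ∘ Equiv.swap i j) (fun k => hR _) (by rwa [hswap])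
  rw [hanon R hR, hfR, hRi, hswap] at hfswap
  exact hab hfswap

theorem stmt6_no_anonymous_iff_semihybrid_general {α : Type*} [Fintype α] [Nontrivial α]
    (D : Set (Pref α)) (hD : PathConnectedDom D) (hdiv : Diversity D) {n : ℕ} (hn : 2 ≤ n) :
    ((¬ ∃ f : (Fin n → Pref α) → α,
        IsRule D f ∧ TopsOnly D f ∧ StrategyProof D f ∧ Anonymous D f) ↔ SemiHybridDomain D) ∧
      ∀ T a b, SemiHybridDomainOn D T a b → ∀ f : (Fin n → Pref α) → α,
        IsRule D f → TopsOnly D f → StrategyProof D f → ∃ i, Dictates D (intv T a b) f i := by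
  refine ⟨⟨fun hno => ?_, ?_⟩, fun T a b h f => h.exists_dictates hdiv⟩
  · have : NeZero n := ⟨by omega⟩
    refine semiHybridDomain_of_forall_exists_not_semiSP hD hdiv fun x hT => ?_
    by_contra! hsemi
    exact hno (exists_anonymous_of_semiSP hT hsemi)
  · rintro ⟨T, a, b, h⟩ ⟨f, hf, htops, hsp, hanon⟩
    obtain ⟨i, hi⟩ := h.exists_dictates hdiv hf htops hsp
    exact hi.not_anonymous (minimallyRich_of_connected hD)
      ⟨a, left_mem_intv a b, b, right_mem_intv a b, h.2.1.1⟩ hn hanon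

/-- on a non-dictatorial, unidimensional domain and for any fixed
`n ≥ 2`, there is no anonymous, tops-only and strategy-proof rule iff the domain
is a semi-hybrid domain satisfying the unique seconds property; moreover on an
`(a,b)`-semi-hybrid domain without such a rule, every tops-only and
strategy-proof rule behaves like a dictatorship on the free zone. -/
theorem stmt6_no_anonymous_iff_semihybrid (D : Set (Pref A)) (hD : D.Nonempty)
    (hcard : 3 ≤ Fintype.card A) (huni : Unidimensional D)
    (hnd : ¬ DictatorialDomain D) (n : ℕ) (hn : 2 ≤ n) :
    ((¬ ∃ f : (Fin n → Pref A) → A,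
        IsRule D f ∧ TopsOnly D f ∧ StrategyProof D f ∧ Anonymous D f) ↔
      (SemiHybridDomain D ∧ UniqueSeconds D)) ∧
    (∀ (T : SimpleGraph A) (a b : A), SemiHybridDomainOn D T a b →
      (¬ ∃ f : (Fin n → Pref A) → A,
        IsRule D f ∧ TopsOnly D f ∧ StrategyProof D f ∧ Anonymous D f) →
      ∀ f : (Fin n → Pref A) → A, IsRule D f → TopsOnly D f → StrategyProof D f →
        DictatorOn D f (intv T a b)) := by
  have : Nontrivial A := Fintype.one_lt_card_iff_nontrivial.1 (by omega)
  obtain ⟨hconn, hdiv, hleaf⟩ := huni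
  have hseconds : UniqueSeconds D :=
    not_imp_comm.1 (dictatorialDomain_of_not_uniqueSeconds hconn hleaf) hnd
  obtain ⟨hiff, hdict⟩ := stmt6_no_anonymous_iff_semihybrid_general D hconn hdiv hn
  exact ⟨hiff.trans (iff_self_and.2 fun _ => hseconds), fun T a b h _ f hf htops hsp =>
    (hdict T a b h f hf htops hsp).elim fun _ hi => hi.dictatorOn⟩
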